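/- arXiv:2504.06568 — 9 statements merged into one kernel-verified Lean document; each statement's English description precedes it below -/
import Mathlib

section
/- For all x, y ∈ ℝ^n, the proximal inequality holds: F(x) − F(T_L y) − ⟨L(y − T_L y), x − y⟩ − (L/2)‖y − T_L y‖² − (μ/2)‖x − y‖² ≥ 0. -/
open RealInnerProductSpace

/-!
Let `t` be the proximal gradient step from `y`. It minimises the sum of the convex function `g` and
the smooth model `z ↦ ⟪∇f(y), z⟫ + L/2 ‖z - y‖²`. Moving from `t` towards `x` cannot decrease this
sum, so convexity of `g` along the segment gives `g t ≤ g x + ⟪∇f(y) + L (t - y), x - t⟫`. For the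
smooth part, the descent lemma bounds `f t` from above and strong convexity bounds `f x` from below,
both by expansions at `y`. Adding the three inequalities and expanding the inner products in terms
of `x - y` and `y - t` gives the claim.
-/

section Descent

theorem norm_sub_sub_fderiv_le_half_mul_norm_sq {E F : Type*}
    [NormedAddCommGroup E] [NormedSpace ℝ E] [NormedAddCommGroup F] [NormedSpace ℝ F]
    {f : E → F} {f' : E → E →L[ℝ] F} {C : ℝ} {y : E} (hf : ∀ x, HasFDerivAt f (f' x) x)
    (hlip : ∀ x, ‖f' x - f' y‖ ≤ C * ‖x - y‖) (x : E) :
    ‖f x - f y - f' y (x - y)‖ ≤ C / 2 * ‖x - y‖ ^ 2 := by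
  set d := x - y with hd
  have hpath (s : ℝ) : HasDerivAt (fun s : ℝ ↦ y + s • d) d s := by
    simpa using ((hasDerivAt_id s).smul_const d).const_add y
  have hderiv (s : ℝ) : HasDerivAt (fun s : ℝ ↦ f (y + s • d) - f y - s • f' y d)
      (f' (y + s • d) d - f' y d) s := by
    simpa using (((hf _).comp_hasDerivAt s (hpath s)).sub_const (f y)).fun_sub
      ((hasDerivAt_id s).smul_const (f' y d))
  have hboundary (s : ℝ) :
      HasDerivAt (fun s : ℝ ↦ C / 2 * ‖d‖ ^ 2 * s ^ 2) (C * ‖d‖ ^ 2 * s) s :=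
    ((hasDerivAt_pow 2 s).const_mul (C / 2 * ‖d‖ ^ 2)).congr_deriv (by norm_num only; ring)
  have hbound : ∀ s ∈ Set.Ico (0 : ℝ) 1, ‖f' (y + s • d) d - f' y d‖ ≤ C * ‖d‖ ^ 2 * s := by
    intro s hs
    calc ‖f' (y + s • d) d - f' y d‖
        ≤ ‖f' (y + s • d) - f' y‖ * ‖d‖ := (f' (y + s • d) - f' y).le_opNorm d
      _ ≤ C * ‖y + s • d - y‖ * ‖d‖ := by gcongr; exact hlip _
      _ = C * ‖d‖ ^ 2 * s := by
          rw [add_sub_cancel_left, norm_smul, Real.norm_of_nonneg hs.1]; ring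
  simpa [hd] using image_norm_le_of_norm_deriv_right_le_deriv_boundary
    (fun s _ ↦ (hderiv s).continuousAt.continuousWithinAt)
    (fun s _ ↦ (hderiv s).hasDerivWithinAt) (by simp) hboundary hbound
    (Set.right_mem_Icc.2 zero_le_one)

variable {E : Type*} [NormedAddCommGroup E] [InnerProductSpace ℝ E] [CompleteSpace E]
  {f : E → ℝ} {f' : E → E} {L : ℝ} {y : E}

theorem le_add_inner_gradient_add_half_mul_norm_sq (hgrad : ∀ x, HasGradientAt f (f' x) x)
    (hlip : ∀ x, ‖f' x - f' y‖ ≤ L * ‖x - y‖) (x : E) :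
    f x ≤ f y + ⟪f' y, x - y⟫ + L / 2 * ‖x - y‖ ^ 2 := by
  have h := norm_sub_sub_fderiv_le_half_mul_norm_sq (fun x ↦ (hgrad x).hasFDerivAt) (y := y)
    (fun x ↦ by rw [← map_sub, LinearIsometryEquiv.norm_map]; exact hlip x) x
  rw [InnerProductSpace.toDual_apply_apply] at h
  linarith [(le_abs_self _).trans h]

theorem add_le_of_gradient_lipschitz_of_strongConvex {μ : ℝ} {x : E}
    (hgrad : ∀ x, HasGradientAt f (f' x) x) (hlip : ∀ x, ‖f' x - f' y‖ ≤ L * ‖x - y‖)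
    (hsc : f y + ⟪f' y, x - y⟫ + μ / 2 * ‖x - y‖ ^ 2 ≤ f x) (t : E) :
    f t + (⟪L • (y - t), x - y⟫ + L / 2 * ‖y - t‖ ^ 2 + μ / 2 * ‖x - y‖ ^ 2)
      + ⟪f' y + L • (t - y), x - t⟫ ≤ f x := by
  have hdescent := le_add_inner_gradient_add_half_mul_norm_sq hgrad hlip t
  have hgradient : ⟪f' y, x - t⟫ = ⟪f' y, x - y⟫ - ⟪f' y, t - y⟫ := by
    rw [← inner_sub_right, sub_sub_sub_cancel_right]
  have hquadratic : ⟪L • (t - y), x - t⟫ = -⟪L • (y - t), x - y⟫ - L * ‖y - t‖ ^ 2 := by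
    rw [← neg_sub y t, ← sub_add_sub_cancel x y t, smul_neg, inner_neg_left, inner_add_right,
      real_inner_smul_left (y - t) (y - t), real_inner_self_eq_norm_sq]
    ring
  rw [inner_add_left, hgradient, hquadratic]
  rw [norm_sub_rev t y] at hdescent
  linarith

end Descent

section Optimality

theorem ne_top_of_isMinOn_add_coe {X : Type*} {g : X → EReal} {h : X → ℝ} {t x : X}
    (hmin : IsMinOn (fun z ↦ g z + (h z : EReal)) Set.univ t) (hx : g x ≠ ⊤) : g t ≠ ⊤ := by
  intro ht
  have hle := isMinOn_univ_iff.1 hmin x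
  rw [ht, EReal.top_add_coe, top_le_iff] at hle
  exact EReal.add_ne_top hx (EReal.coe_ne_top _) hle

/-- Convexity of an extended-real-valued function on a whole real vector space. It is spelled out
because `ConvexOn` needs a scalar action of `ℝ` on the codomain, which `EReal` does not have. In
`EReal`, `0 * ⊤ = 0` and `⊤ + ⊥ = ⊥`. -/
def ERealConvex {E : Type*} [AddCommGroup E] [Module ℝ E] (g : E → EReal) : Prop :=
  ∀ x y : E, ∀ a b : ℝ, 0 ≤ a → 0 ≤ b → a + b = 1 →
    g (a • x + b • y) ≤ (a : EReal) * g x + (b : EReal) * g y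

namespace ERealConvex

variable {E : Type*} [AddCommGroup E] [Module ℝ E] {g : E → EReal} {h : E → ℝ} {t x : E}

theorem sub_le_slope_of_isMinOn_add (hg : ERealConvex g)
    (hmin : IsMinOn (fun z ↦ g z + (h z : EReal)) Set.univ t) {γ ξ : ℝ} (hγ : g t = γ)
    (hξ : g x = ξ) {a : ℝ} (ha : a ∈ Set.Ioc 0 1) :
    γ - ξ ≤ a⁻¹ • (h (t + a • (x - t)) - h t) := by
  have hsegment : (1 - a) • t + a • x = t + a • (x - t) := by module
  have hconv := hg t x (1 - a) a (sub_nonneg.2 ha.2) ha.1.le (sub_add_cancel 1 a)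
  have hle := (isMinOn_univ_iff.1 hmin (t + a • (x - t))).trans
    (add_le_add_left (hsegment ▸ hconv) _)
  rw [hγ, hξ] at hle
  norm_cast at hle
  rw [smul_eq_mul, le_inv_mul_iff₀ ha.1]
  linarith

theorem le_add_lineDeriv_of_isMinOn_add [TopologicalSpace E] {h' : ℝ} (hg : ERealConvex g)
    (hmin : IsMinOn (fun z ↦ g z + (h z : EReal)) Set.univ t)
    (hh : HasLineDerivAt ℝ h h' t (x - t)) : g t ≤ g x + (h' : EReal) := by
  induction hγ : g t with
  | bot => exact bot_le
  | top =>
    have hx : g x = ⊤ := by_contra fun hx ↦ ne_top_of_isMinOn_add_coe hmin hx hγ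
    simp [hx]
  | coe γ =>
    induction hξ : g x with
    | bot => simpa [hγ, hξ, ← EReal.coe_add] using isMinOn_univ_iff.1 hmin x
    | top => simp
    | coe ξ =>
      have hslope : γ - ξ ≤ h' := by
        refine ge_of_tendsto hh.tendsto_slope_zero_right ?_
        filter_upwards [Ioc_mem_nhdsGT (zero_lt_one' ℝ)] with a ha
        exact hg.sub_le_slope_of_isMinOn_add hmin hγ hξ ha
      exact_mod_cast sub_le_iff_le_add'.1 hslope

end ERealConvex

end Optimality

section ProxGradStep

variable {E : Type*} [NormedAddCommGroup E] [InnerProductSpace ℝ E]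

/-- `t` is a proximal step from `y` for `g` along the linear functional `⟪v, ·⟫`. For `v = ∇f(y)`
this is the proximal gradient step `t = T_L(y)`, as a relation, so that no claim of existence or
uniqueness is built in. -/
def IsProxGradStep (L : ℝ) (g : E → EReal) (v y t : E) : Prop :=
  IsMinOn (fun z ↦ g z + ((⟪v, z⟫ + L / 2 * ‖z - y‖ ^ 2 : ℝ) : EReal)) Set.univ t

theorem hasLineDerivAt_inner_add_half_mul_norm_sub_sq (L : ℝ) (v y t d : E) :
    HasLineDerivAt ℝ (fun z ↦ ⟪v, z⟫ + L / 2 * ‖z - y‖ ^ 2) ⟪v + L • (t - y), d⟫ t d := by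
  have hinner : HasFDerivAt (fun z : E ↦ ⟪v, z⟫) (innerSL ℝ v) t := (innerSL ℝ v).hasFDerivAt
  have hnorm : HasFDerivAt (fun z : E ↦ L / 2 * ‖z - y‖ ^ 2) (L • innerSL ℝ (t - y)) t := by
    refine (((hasFDerivAt_id t).sub_const y).norm_sq.const_mul (L / 2)).congr_fderiv ?_
    ext z
    simp
    ring
  simpa [inner_add_left, inner_sub_left, real_inner_smul_left] using
    (hinner.fun_add hnorm).hasLineDerivAt d

namespace IsProxGradStep

variable {L : ℝ} {g : E → EReal} {v y t : E}

theorem le_add_inner (ht : IsProxGradStep L g v y t) (hg : ERealConvex g) (x : E) :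
    g t ≤ g x + (⟪v + L • (t - y), x - t⟫ : ℝ) :=
  hg.le_add_lineDeriv_of_isMinOn_add ht (hasLineDerivAt_inner_add_half_mul_norm_sub_sq L v y t _)

theorem prox_inequality [CompleteSpace E] {f : E → ℝ} {f' : E → E} {μ : ℝ} {x : E}
    (ht : IsProxGradStep L g (f' y) y t) (hg : ERealConvex g)
    (hgrad : ∀ x, HasGradientAt f (f' x) x) (hlip : ∀ x, ‖f' x - f' y‖ ≤ L * ‖x - y‖)
    (hsc : f y + ⟪f' y, x - y⟫ + μ / 2 * ‖x - y‖ ^ 2 ≤ f x) :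
    ((⟪L • (y - t), x - y⟫ + L / 2 * ‖y - t‖ ^ 2 + μ / 2 * ‖x - y‖ ^ 2 : ℝ) : EReal)
      + (f t + g t) ≤ f x + g x := by
  set c : ℝ := ⟪L • (y - t), x - y⟫ + L / 2 * ‖y - t‖ ^ 2 + μ / 2 * ‖x - y‖ ^ 2
  set m : ℝ := ⟪f' y + L • (t - y), x - t⟫
  have hsmooth : f t + c + m ≤ f x :=
    add_le_of_gradient_lipschitz_of_strongConvex hgrad hlip hsc t
  calc (c : EReal) + (f t + g t)
      ≤ c + (f t + (g x + m)) := by gcongr; exact ht.le_add_inner hg x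
    _ = ((f t + c + m : ℝ) : EReal) + g x := by push_cast; abel
    _ ≤ f x + g x := by gcongr

end IsProxGradStep

end ProxGradStep

theorem stmt1_general {E : Type*} [NormedAddCommGroup E] [InnerProductSpace ℝ E] [CompleteSpace E]
    {L μ : ℝ} {f : E → ℝ} {f' : E → E} {g : E → EReal} {x y t : E}
    (hgrad : ∀ x, HasGradientAt f (f' x) x) (hlip : ∀ x, ‖f' x - f' y‖ ≤ L * ‖x - y‖)
    (hsc : f y + ⟪f' y, x - y⟫ + μ / 2 * ‖x - y‖ ^ 2 ≤ f x)
    (hg_bot : g t ≠ ⊥) (hg_proper : ∃ z, g z ≠ ⊤) (hg_conv : ERealConvex g)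
    (ht : IsProxGradStep L g (f' y) y t) :
    ((f x : EReal) + g x) - ((f t : EReal) + g t)
      - ((⟪L • (y - t), x - y⟫ : ℝ) : EReal)
      - ((L / 2 * ‖y - t‖ ^ 2 : ℝ) : EReal)
      - ((μ / 2 * ‖x - y‖ ^ 2 : ℝ) : EReal) ≥ (0 : EReal) := by
  obtain ⟨z, hz⟩ := hg_proper
  have hF_top : (f t : EReal) + g t ≠ ⊤ :=
    EReal.add_ne_top (EReal.coe_ne_top _) (ne_top_of_isMinOn_add_coe ht hz)
  have hF_bot : (f t : EReal) + g t ≠ ⊥ := by simp [EReal.add_eq_bot_iff, hg_bot]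
  have hineq := (EReal.le_sub_iff_add_le (.inl hF_bot) (.inl hF_top)).2
    (ht.prox_inequality hg_conv hgrad hlip hsc)
  simp only [ge_iff_le, EReal.le_sub_iff_add_le (.inl (EReal.coe_ne_bot _))
    (.inl (EReal.coe_ne_top _)), zero_add]
  convert hineq using 1
  push_cast
  ac_rfl

/-- proximal inequality.
For all `x, y ∈ ℝⁿ`,
`F(x) − F(T_L y) − ⟨L(y − T_L y), x − y⟩ − (L/2)‖y − T_L y‖² − (μ/2)‖x − y‖² ≥ 0`,
where `F = f + g` with `f` `L`-Lipschitz smooth and `μ ≥ 0` strongly convex, `g` proper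
closed convex, and `T_L y` the proximal gradient step
`argmin_x { g(x) + ⟨∇f(y), x⟩ + (L/2)‖x − y‖² }`. -/
theorem stmt1 {n : ℕ} (L μ : ℝ) (hL : 0 < L) (hμ : 0 ≤ μ)
    (f : EuclideanSpace ℝ (Fin n) → ℝ)
    (f' : EuclideanSpace ℝ (Fin n) → EuclideanSpace ℝ (Fin n))
    (hgrad : ∀ x, HasGradientAt f (f' x) x)
    (hlip : ∀ x y, ‖f' x - f' y‖ ≤ L * ‖x - y‖)
    (hsc : ∀ x y, f y + ⟪f' y, x - y⟫ + μ / 2 * ‖x - y‖ ^ 2 ≤ f x)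
    (g : EuclideanSpace ℝ (Fin n) → EReal)
    (hg_bot : ∀ x, g x ≠ ⊥) (hg_proper : ∃ x, g x ≠ ⊤)
    (hg_lsc : LowerSemicontinuous g)
    (hg_conv : ∀ x y : EuclideanSpace ℝ (Fin n), ∀ a b : ℝ,
      0 ≤ a → 0 ≤ b → a + b = 1 →
      g (a • x + b • y) ≤ (a : EReal) * g x + (b : EReal) * g y)
    (T : EuclideanSpace ℝ (Fin n) → EuclideanSpace ℝ (Fin n))
    (hT : ∀ y x, g (T y) + ((⟪f' y, T y⟫ + L / 2 * ‖T y - y‖ ^ 2 : ℝ) : EReal)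
        ≤ g x + ((⟪f' y, x⟫ + L / 2 * ‖x - y‖ ^ 2 : ℝ) : EReal))
    (x y : EuclideanSpace ℝ (Fin n)) :
    ((f x : EReal) + g x) - ((f (T y) : EReal) + g (T y))
      - ((⟪L • (y - T y), x - y⟫ : ℝ) : EReal)
      - ((L / 2 * ‖y - T y‖ ^ 2 : ℝ) : EReal)
      - ((μ / 2 * ‖x - y‖ ^ 2 : ℝ) : EReal) ≥ (0 : EReal) :=
  stmt1_general hgrad (hlip · y) (hsc x y) (hg_bot _) hg_proper hg_conv (isMinOn_univ_iff.2 (hT y))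
end

section
/- Stepwise Lyapunov inequality: let 0 ≤ μ < L, α_k ∈ (0, 1), γ_k > 0, R_k ∈ ℝ, and let γ̂_{k+1} := (1 − α_k)γ_k + μα_k, y_k := (γ_k + α_k μ)^{-1}(α_k γ_k v_k + γ̂_{k+1} x_k), g_k := L(y_k − T_L(y_k)), v_{k+1} := γ̂_{k+1}^{-1}(γ_k(1 − α_k)v_k − α_k g_k + μα_k y_k), x_{k+1} := T_L(y_k). Define ε_k := F(x_k) − F(T_L(y_k)) − ⟨g_k, x_k − y_k⟩ − (1/(2L))‖g_k‖² and R_{k+1} := (1/2)(L^{-1} − α_k²/γ̂_{k+1})‖g_k‖² + (1 − α_k)(ε_k + R_k + (μα_k γ_k/(2γ̂_{k+1}))‖v_k − y_k‖²). Then for every x* ∈ ℝ^n: F(x_{k+1}) − F(x*) + R_{k+1} + (γ̂_{k+1}/2)‖v_{k+1} − x*‖² ≤ (1 − α_k)(F(x_k) − F(x*) + R_k + (γ_k/2)‖v_k − x*‖²). -/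
open RealInnerProductSpace

/-!
The engine is the proximal-gradient inequality
`F z ≥ F p + ⟪G, z - y⟫ + ‖G‖² / (2L) + μ/2 ‖z - y‖²`, where `p = T_L(y)` and `G = L (y - p)`.
It is the sum of the descent lemma for `f` between `y` and `p`, strong convexity of `f` between
`y` and `z`, and the optimality condition `G - ∇f(y) ∈ ∂g(p)`.

At `z = x*` and multiplied by `α`, it is exactly the claim: `v_{k+1}` is the weighted mean of `v`
and `y` shifted by `-(α/γ̂) G`, so expanding `‖v_{k+1} - x*‖²` about that mean gives the quadratic
terms of the inequality at `x*`, the remainder `α²/(2γ̂) ‖G‖²` absorbed by `R_{k+1}`, and a cross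
term in `⟪G, v - y⟫`. As `γ̂ (x - y) = -α γ (v - y)` by the choice of `y`, the cross term is
`(1 - α) ⟪G, x - y⟫`, which cancels against the one in `ε`. Infinite values cost nothing: the left
side is `⊥` when `F x* = ⊤`, and otherwise the right side is `⊤` when `F x = ⊤`.
-/

section Descent

variable {E F : Type*} [NormedAddCommGroup E] [NormedSpace ℝ E]
  [NormedAddCommGroup F] [NormedSpace ℝ F]

lemma norm_sub_sub_le_of_hasFDerivAt_of_lipschitz {L : ℝ} {f : E → F} {f' : E → E →L[ℝ] F} {y : E}
    (hf : ∀ x, HasFDerivAt f (f' x) x) (hlip : ∀ x, ‖f' x - f' y‖ ≤ L * ‖x - y‖) (x : E) :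
    ‖f x - f y - f' y (x - y)‖ ≤ L / 2 * ‖x - y‖ ^ 2 := by
  set d := x - y with hd
  let φ : ℝ → F := fun t ↦ f (y + t • d) - f y - t • f' y d
  have hφ (t : ℝ) : HasDerivAt φ ((f' (y + t • d) - f' y) d) t := by
    have hline : HasDerivAt (fun t : ℝ ↦ y + t • d) d t := by
      simpa using ((hasDerivAt_id t).smul_const d).const_add y
    have hlin : HasDerivAt (fun t : ℝ ↦ t • f' y d) (f' y d) t := by
      simpa using (hasDerivAt_id t).smul_const (f' y d)
    exact (((hf _).comp_hasDerivAt t hline).sub_const (f y)).sub hlin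
  have hbound (t : ℝ) : HasDerivAt (fun t ↦ L / 2 * ‖d‖ ^ 2 * t ^ 2) (L * t * ‖d‖ ^ 2) t := by
    refine ((hasDerivAt_pow 2 t).const_mul (L / 2 * ‖d‖ ^ 2)).congr_deriv ?_
    push_cast
    ring
  have hφ' (t : ℝ) (ht : t ∈ Set.Ico 0 1) :
      ‖(f' (y + t • d) - f' y) d‖ ≤ L * t * ‖d‖ ^ 2 := calc
    _ ≤ ‖f' (y + t • d) - f' y‖ * ‖d‖ := ContinuousLinearMap.le_opNorm _ _
    _ ≤ L * ‖y + t • d - y‖ * ‖d‖ := by gcongr; exact hlip _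
    _ = L * t * ‖d‖ ^ 2 := by
      rw [add_sub_cancel_left, norm_smul, Real.norm_of_nonneg ht.1]
      ring
  have h := image_norm_le_of_norm_deriv_right_le_deriv_boundary (f := φ) (a := 0) (b := 1)
    (fun t _ ↦ (hφ t).continuousAt.continuousWithinAt) (fun t _ ↦ (hφ t).hasDerivWithinAt)
    (by simp [φ]) hbound hφ' (Set.right_mem_Icc.2 zero_le_one)
  simpa [φ, hd] using h

lemma le_add_inner_add_of_hasGradientAt_of_lipschitz {H : Type*} [NormedAddCommGroup H]
    [InnerProductSpace ℝ H] [CompleteSpace H] {L : ℝ} {f : H → ℝ} {f' : H → H} {y : H}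
    (hf : ∀ x, HasGradientAt f (f' x) x) (hlip : ∀ x, ‖f' x - f' y‖ ≤ L * ‖x - y‖) (x : H) :
    f x ≤ f y + ⟪f' y, x - y⟫ + L / 2 * ‖x - y‖ ^ 2 := by
  have h := norm_sub_sub_le_of_hasFDerivAt_of_lipschitz (fun x ↦ (hf x).hasFDerivAt)
    (fun x ↦ by rw [← map_sub, LinearIsometryEquiv.norm_map]; exact hlip x) x
  rw [InnerProductSpace.toDual_apply_apply] at h
  linarith [le_of_abs_le h]

end Descent

section ProxGrad

/-- Convexity of an extended-real-valued function on the whole space. Mathlib's `ConvexOn` does not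
apply because `EReal` is not a module over `ℝ`. -/
def EConvex {V : Type*} [AddCommMonoid V] [Module ℝ V] (g : V → EReal) : Prop :=
  ∀ x y : V, ∀ a b : ℝ, 0 ≤ a → 0 ≤ b → a + b = 1 →
    g (a • x + b • y) ≤ (a : EReal) * g x + (b : EReal) * g y

variable {E : Type*} [NormedAddCommGroup E] [InnerProductSpace ℝ E]

/-- `s` is a subgradient of the extended-real-valued function `g` at `p`, that is, `s ∈ ∂g(p)`. -/
def IsSubgradientAt (g : E → EReal) (s p : E) : Prop :=
  ∀ z, g p + (⟪s, z - p⟫ : ℝ) ≤ g z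

/-- `p` is a value at `y` of the proximal gradient operator `T_L`, the argument `w` standing for
`∇f(y)`. Being a predicate, it presupposes neither existence nor uniqueness of the minimizer. -/
def IsProxGradPoint (L : ℝ) (g : E → EReal) (w y p : E) : Prop :=
  ∀ x, g p + ((⟪w, p⟫ + L / 2 * ‖p - y‖ ^ 2 : ℝ) : EReal)
    ≤ g x + ((⟪w, x⟫ + L / 2 * ‖x - y‖ ^ 2 : ℝ) : EReal)

lemma nonneg_of_forall_nonneg_add_mul {c K : ℝ} (h : ∀ t ∈ Set.Ioo (0 : ℝ) 1, 0 ≤ c + t * K) :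
    0 ≤ c := by
  have hcont : Continuous fun t : ℝ ↦ c + t * K := by fun_prop
  have hlim : Filter.Tendsto (fun t : ℝ ↦ c + t * K) (nhdsWithin 0 (Set.Ioi 0)) (nhds c) := by
    simpa using (hcont.tendsto 0).mono_left nhdsWithin_le_nhds
  exact ge_of_tendsto hlim (Filter.eventually_of_mem (Ioo_mem_nhdsGT zero_lt_one) h)

lemma inner_add_norm_sq_add_smul (L t : ℝ) (w y p d : E) :
    ⟪w, p + t • d⟫ + L / 2 * ‖p + t • d - y‖ ^ 2
      = ⟪w, p⟫ + L / 2 * ‖p - y‖ ^ 2 - t * ⟪L • (y - p) - w, d⟫ + t ^ 2 * (L / 2 * ‖d‖ ^ 2) := by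
  have hshift : p + t • d - y = (p - y) + t • d := by abel
  rw [hshift, norm_add_sq_real, norm_smul, mul_pow, Real.norm_eq_abs, sq_abs, ← neg_sub p y]
  simp only [inner_add_right, inner_smul_right, inner_sub_left, real_inner_smul_left,
    inner_neg_left]
  ring

namespace IsProxGradPoint

variable {L : ℝ} {g : E → EReal} {w y p : E}

lemma ne_top (hp : IsProxGradPoint L g w y p) {x : E} (hx : g x ≠ ⊤) : g p ≠ ⊤ := by
  intro htop
  have h := hp x
  rw [htop, EReal.top_add_coe, top_le_iff] at h
  exact EReal.add_ne_top hx (EReal.coe_ne_top _) h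

lemma add_inner_le_of_coe (hp : IsProxGradPoint L g w y p) (hg : EConvex g) {z : E} {gp gz : ℝ}
    (hgp : g p = gp) (hgz : g z = gz) : gp + ⟪L • (y - p) - w, z - p⟫ ≤ gz := by
  suffices 0 ≤ gz - gp - ⟪L • (y - p) - w, z - p⟫ by linarith
  -- Compare `p` with `p + t (z - p)`, divide by `t`, and let `t → 0`.
  refine nonneg_of_forall_nonneg_add_mul (K := L / 2 * ‖z - p‖ ^ 2) fun t ht ↦ ?_
  have hconv := hg p z (1 - t) t (sub_nonneg.2 ht.2.le) ht.1.le (sub_add_cancel 1 t)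
  have hmin := (hp ((1 - t) • p + t • z)).trans (add_le_add_left hconv _)
  have hseg : (1 - t) • p + t • z = p + t • (z - p) := by module
  rw [hgp, hgz, hseg, inner_add_norm_sq_add_smul] at hmin
  norm_cast at hmin
  refine nonneg_of_mul_nonneg_right ?_ ht.1
  linarith

lemma isSubgradientAt (hp : IsProxGradPoint L g w y p) (hg : EConvex g) :
    IsSubgradientAt g (L • (y - p) - w) p := by
  intro z
  have hz := hp z
  cases hgp : g p <;> cases hgz : g z
  case coe.coe => exact_mod_cast hp.add_inner_le_of_coe hg hgp hgz
  all_goals simp_all [← EReal.coe_add]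

end IsProxGradPoint

lemma add_inner_add_le_of_isSubgradientAt {L μ : ℝ} (hL : 0 < L) {f : E → ℝ} {g : E → EReal}
    {w y p z G : E} (hG : G = L • (y - p))
    (hupper : f p ≤ f y + ⟪w, p - y⟫ + L / 2 * ‖p - y‖ ^ 2)
    (hlower : f y + ⟪w, z - y⟫ + μ / 2 * ‖z - y‖ ^ 2 ≤ f z)
    (hsub : IsSubgradientAt g (G - w) p) :
    (f p + g p) + ((⟪G, z - y⟫ + 1 / (2 * L) * ‖G‖ ^ 2 + μ / 2 * ‖z - y‖ ^ 2 : ℝ) : EReal)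
      ≤ f z + g z := by
  have hpy : p - y = -(L⁻¹ • G) := by
    rw [hG, inv_smul_smul₀ hL.ne', neg_sub]
  have hzp : z - p = (z - y) - (p - y) := by abel
  have hnorm : L / 2 * ‖p - y‖ ^ 2 = 1 / (2 * L) * ‖G‖ ^ 2 := by
    rw [hpy, norm_neg, norm_smul, Real.norm_of_nonneg (inv_nonneg.2 hL.le)]
    field_simp
  have hinner : ⟪G, p - y⟫ = -(1 / L * ‖G‖ ^ 2) := by
    rw [hpy, inner_neg_right, inner_smul_right, real_inner_self_eq_norm_sq, one_div]
  have hreal : f p + (⟪G, z - y⟫ + 1 / (2 * L) * ‖G‖ ^ 2 + μ / 2 * ‖z - y‖ ^ 2)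
      ≤ f z + ⟪G - w, z - p⟫ := by
    have hhalf : 1 / L * ‖G‖ ^ 2 = 2 * (1 / (2 * L) * ‖G‖ ^ 2) := by field_simp
    rw [hzp, inner_sub_left, inner_sub_right G (z - y), inner_sub_right w (z - y), hinner]
    linarith
  calc _ = ((f p + (⟪G, z - y⟫ + 1 / (2 * L) * ‖G‖ ^ 2 + μ / 2 * ‖z - y‖ ^ 2) : ℝ) : EReal)
          + g p := by rw [EReal.coe_add (f p), add_right_comm]
    _ ≤ ((f z + ⟪G - w, z - p⟫ : ℝ) : EReal) + g p := by gcongr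
    _ = f z + (g p + (⟪G - w, z - p⟫ : ℝ)) := by rw [EReal.coe_add, add_assoc, add_comm (g p)]
    _ ≤ f z + g z := by gcongr; exact hsub z

end ProxGrad

section WeightedMean

variable {𝕜 V : Type*} [Field 𝕜] [AddCommGroup V] [Module 𝕜 V]

lemma smul_weighted_mean_sub {p q : 𝕜} (h : p + q ≠ 0) (v y s : V) :
    (p + q) • ((p + q)⁻¹ • (p • v + q • y) - s) = p • (v - s) + q • (y - s) := by
  rw [smul_sub, smul_inv_smul₀ h]
  module

lemma smul_weighted_mean_sub_eq_neg_smul_sub {μ α γ γhat : 𝕜}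
    (hne : γhat ≠ 0) (hγhat : γhat = (1 - α) * γ + μ * α) (hsum : γ + α * μ ≠ 0)
    {v x y : V} (hy : y = (γ + α * μ)⁻¹ • ((α * γ) • v + γhat • x)) :
    α • (γhat⁻¹ • (((1 - α) * γ) • v + (μ * α) • y) - y) = -((1 - α) • (x - y)) := by
  have hvm : γhat • (γhat⁻¹ • (((1 - α) * γ) • v + (μ * α) • y) - y)
      = ((1 - α) * γ) • (v - y) := by
    have h := smul_weighted_mean_sub (hγhat ▸ hne) v y y
    rwa [← hγhat, sub_self, smul_zero, add_zero] at h
  have hvx : (α * γ) • (v - y) = -(γhat • (x - y)) := by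
    have hweights : γ + α * μ = α * γ + γhat := by rw [hγhat]; ring
    rw [hweights] at hsum hy
    have h := smul_weighted_mean_sub hsum v x y
    rw [← hy, sub_self, smul_zero] at h
    exact eq_neg_of_add_eq_zero_left h.symm
  refine smul_right_injective V hne ?_
  linear_combination (norm := module) α • hvm + (1 - α) • hvx

end WeightedMean

section Lyapunov

variable {E : Type*} [NormedAddCommGroup E] [InnerProductSpace ℝ E]

lemma mul_norm_weighted_mean_sub_sq {p q : ℝ} (h : p + q ≠ 0) (v y s : E) :
    (p + q) * ‖(p + q)⁻¹ • (p • v + q • y) - s‖ ^ 2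
      = p * ‖v - s‖ ^ 2 + q * ‖y - s‖ ^ 2 - p * q / (p + q) * ‖v - y‖ ^ 2 := by
  have hmean : (p + q)⁻¹ • (p • v + q • y) - s = (p + q)⁻¹ • (p • (v - s) + q • (y - s)) := by
    rw [← smul_weighted_mean_sub h, inv_smul_smul₀ h]
  have hvy : v - y = (v - s) - (y - s) := by abel
  rw [hmean, hvy]
  generalize v - s = a
  generalize y - s = b
  rw [norm_smul, mul_pow, norm_inv, inv_pow, Real.norm_eq_abs, sq_abs, norm_add_sq_real,
    norm_sub_sq_real, norm_smul, norm_smul, mul_pow, mul_pow, Real.norm_eq_abs, Real.norm_eq_abs,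
    sq_abs, sq_abs, real_inner_smul_left, real_inner_smul_right]
  field_simp
  ring

lemma norm_update_sub_sq {μ α γ γhat : ℝ} (hne : γhat ≠ 0) (hγhat : γhat = (1 - α) * γ + μ * α)
    (hsum : γ + α * μ ≠ 0) {v x y G v' : E}
    (hy : y = (γ + α * μ)⁻¹ • ((α * γ) • v + γhat • x))
    (hv' : v' = γhat⁻¹ • ((γ * (1 - α)) • v - α • G + (μ * α) • y)) (s : E) :
    γhat / 2 * ‖v' - s‖ ^ 2 =
      (1 - α) * (γ / 2 * ‖v - s‖ ^ 2) + α * (⟪G, s - y⟫ + μ / 2 * ‖s - y‖ ^ 2)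
        + (1 - α) * ⟪G, x - y⟫ + α ^ 2 / (2 * γhat) * ‖G‖ ^ 2
        - (1 - α) * (μ * α * γ / (2 * γhat) * ‖v - y‖ ^ 2) := by
  set m := γhat⁻¹ • (((1 - α) * γ) • v + (μ * α) • y) with hm
  have hshift : v' - s = (m - s) - (α / γhat) • G := by
    rw [hv', hm]
    module
  have hmean : γhat * ‖m - s‖ ^ 2 = (1 - α) * γ * ‖v - s‖ ^ 2 + μ * α * ‖s - y‖ ^ 2
      - (1 - α) * γ * (μ * α) / γhat * ‖v - y‖ ^ 2 := by
    rw [hm, norm_sub_rev s y, hγhat]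
    exact mul_norm_weighted_mean_sub_sq (hγhat ▸ hne) v y s
  have hmx : α • (m - y) = -((1 - α) • (x - y)) :=
    smul_weighted_mean_sub_eq_neg_smul_sub hne hγhat hsum hy
  have hcross : α * ⟪G, m - s⟫ = -(α * ⟪G, s - y⟫) - (1 - α) * ⟪G, x - y⟫ := by
    have hms : α • (m - s) = -(α • (s - y)) - (1 - α) • (x - y) := by
      linear_combination (norm := module) hmx
    simpa only [inner_smul_right, inner_sub_right, inner_neg_right] using congrArg (⟪G, ·⟫) hms
  calc γhat / 2 * ‖v' - s‖ ^ 2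
      = γhat * ‖m - s‖ ^ 2 / 2 - α * ⟪G, m - s⟫ + α ^ 2 / (2 * γhat) * ‖G‖ ^ 2 := by
        rw [hshift, norm_sub_sq_real, norm_smul, mul_pow, Real.norm_eq_abs, sq_abs,
          inner_smul_right, real_inner_comm]
        field_simp
    _ = _ := by
        rw [hmean, hcross]
        ring

lemma coe_sub_add_le_mul_of_forall_coe {β a q i e k w t : ℝ} (hβ : 0 < β) {X S : EReal}
    (hS : S ≠ ⊥)
    (h : ∀ x s : ℝ, S = s → a - s + (q + β * (x - a - i - e + k)) + w ≤ β * (x - s + t)) :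
    (a : EReal) - S + ((q : EReal) + β * (X - a - i - e + (k : ℝ))) + (w : ℝ)
      ≤ (β : EReal) * (X - S + (t : ℝ)) := by
  cases S with
  | bot => exact absurd rfl hS
  | top => simp
  | coe s =>
    cases X with
    | bot => simp [EReal.coe_mul_bot_of_pos hβ]
    | top => simp [EReal.coe_mul_top_of_pos hβ]
    | coe x => exact_mod_cast h x s rfl

end Lyapunov

theorem stmt4_general {E : Type*} [NormedAddCommGroup E] [InnerProductSpace ℝ E] [CompleteSpace E]
    {L μ : ℝ} (hL : 0 < L) {f : E → ℝ} {f' : E → E}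
    (hgrad : ∀ x, HasGradientAt f (f' x) x)
    (hlip : ∀ x y, ‖f' x - f' y‖ ≤ L * ‖x - y‖)
    (hsc : ∀ x y, f y + ⟪f' y, x - y⟫ + μ / 2 * ‖x - y‖ ^ 2 ≤ f x)
    {g : E → EReal} (hg_bot : ∀ x, g x ≠ ⊥) (hg_proper : ∃ x, g x ≠ ⊤) (hg_conv : EConvex g)
    {α γ γhat : ℝ} (hα0 : 0 ≤ α) (hα1 : α < 1) (hγ : 0 ≤ γ)
    (hγhat : γhat = (1 - α) * γ + μ * α) (hpos : 0 < γhat)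
    {v x y p G v' : E} (hy : y = (γ + α * μ)⁻¹ • ((α * γ) • v + γhat • x))
    (hp : IsProxGradPoint L g (f' y) y p) (hG : G = L • (y - p))
    (hv' : v' = γhat⁻¹ • ((γ * (1 - α)) • v - α • G + (μ * α) • y))
    {R : ℝ} {ε R' : EReal}
    (hε : ε = ((f x : EReal) + g x) - ((f p : EReal) + g p)
        - ((⟪G, x - y⟫ : ℝ) : EReal) - ((1 / (2 * L) * ‖G‖ ^ 2 : ℝ) : EReal))
    (hR' : R' = ((1 / 2 * (L⁻¹ - α ^ 2 / γhat) * ‖G‖ ^ 2 : ℝ) : EReal)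
        + ((1 - α : ℝ) : EReal)
          * (ε + ((R + μ * α * γ / (2 * γhat) * ‖v - y‖ ^ 2 : ℝ) : EReal))) (s : E) :
    ((f p : EReal) + g p) - ((f s : EReal) + g s) + R' + ((γhat / 2 * ‖v' - s‖ ^ 2 : ℝ) : EReal)
      ≤ ((1 - α : ℝ) : EReal) * (((f x : EReal) + g x) - ((f s : EReal) + g s)
          + ((R + γ / 2 * ‖v - s‖ ^ 2 : ℝ) : EReal)) := by
  have hsum : 0 < γ + α * μ := by linarith [mul_nonneg hα0 hγ]
  obtain ⟨x₀, hx₀⟩ := hg_proper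
  lift g p to ℝ using ⟨hp.ne_top hx₀, hg_bot p⟩ with gp hgp
  have hprox := add_inner_add_le_of_isSubgradientAt hL hG
    (le_add_inner_add_of_hasGradientAt_of_lipschitz hgrad (hlip · y) p) (hsc s y)
    (hG ▸ hp.isSubgradientAt hg_conv)
  rw [← hgp] at hprox
  rw [hR', hε, ← EReal.coe_add]
  refine coe_sub_add_le_mul_of_forall_coe (sub_pos.2 hα1)
    (EReal.add_ne_bot_iff.2 ⟨EReal.coe_ne_bot _, hg_bot s⟩) fun X S hS ↦ ?_
  rw [hS] at hprox
  norm_cast at hprox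
  have hG2 : 1 / 2 * (L⁻¹ - α ^ 2 / γhat) * ‖G‖ ^ 2
      = 1 / (2 * L) * ‖G‖ ^ 2 - α ^ 2 / (2 * γhat) * ‖G‖ ^ 2 := by
    field_simp
  rw [hG2, norm_update_sub_sq hpos.ne' hγhat hsum.ne' hy hv' s]
  linarith [mul_le_mul_of_nonneg_left hprox hα0]

/-- stepwise Lyapunov inequality.
Let `0 ≤ μ < L`, `α_k ∈ (0,1)`, `γ_k > 0`, `R_k ∈ ℝ`, and set
`γ̂_{k+1} := (1 − α_k)γ_k + μα_k`, `y_k := (γ_k + α_k μ)⁻¹(α_k γ_k v_k + γ̂_{k+1} x_k)`,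
`g_k := L(y_k − T_L(y_k))`, `v_{k+1} := γ̂_{k+1}⁻¹(γ_k(1 − α_k)v_k − α_k g_k + μα_k y_k)`,
`x_{k+1} := T_L(y_k)`,
`ε_k := F(x_k) − F(T_L(y_k)) − ⟨g_k, x_k − y_k⟩ − (1/(2L))‖g_k‖²` and
`R_{k+1} := (1/2)(L⁻¹ − α_k²/γ̂_{k+1})‖g_k‖²
    + (1 − α_k)(ε_k + R_k + (μα_k γ_k/(2γ̂_{k+1}))‖v_k − y_k‖²)`.
Then for every `x* ∈ ℝⁿ`:
`F(x_{k+1}) − F(x*) + R_{k+1} + (γ̂_{k+1}/2)‖v_{k+1} − x*‖²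
    ≤ (1 − α_k)(F(x_k) − F(x*) + R_k + (γ_k/2)‖v_k − x*‖²)`. -/
theorem stmt4 {n : ℕ} (L μ : ℝ) (hμ : 0 ≤ μ) (hμL : μ < L)
    (f : EuclideanSpace ℝ (Fin n) → ℝ)
    (f' : EuclideanSpace ℝ (Fin n) → EuclideanSpace ℝ (Fin n))
    (hgrad : ∀ x, HasGradientAt f (f' x) x)
    (hlip : ∀ x y, ‖f' x - f' y‖ ≤ L * ‖x - y‖)
    (hsc : ∀ x y, f y + ⟪f' y, x - y⟫ + μ / 2 * ‖x - y‖ ^ 2 ≤ f x)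
    (g : EuclideanSpace ℝ (Fin n) → EReal)
    (hg_bot : ∀ x, g x ≠ ⊥) (hg_proper : ∃ x, g x ≠ ⊤)
    (hg_lsc : LowerSemicontinuous g)
    (hg_conv : ∀ x y : EuclideanSpace ℝ (Fin n), ∀ a b : ℝ,
      0 ≤ a → 0 ≤ b → a + b = 1 →
      g (a • x + b • y) ≤ (a : EReal) * g x + (b : EReal) * g y)
    (T : EuclideanSpace ℝ (Fin n) → EuclideanSpace ℝ (Fin n))
    (hT : ∀ y x, g (T y) + ((⟪f' y, T y⟫ + L / 2 * ‖T y - y‖ ^ 2 : ℝ) : EReal)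
        ≤ g x + ((⟪f' y, x⟫ + L / 2 * ‖x - y‖ ^ 2 : ℝ) : EReal))
    (α γ Rk : ℝ) (hα : α ∈ Set.Ioo (0 : ℝ) 1) (hγ : 0 < γ)
    (vk xk : EuclideanSpace ℝ (Fin n))
    (γhat : ℝ) (hγhat : γhat = (1 - α) * γ + μ * α)
    (yk : EuclideanSpace ℝ (Fin n))
    (hyk : yk = (γ + α * μ)⁻¹ • ((α * γ) • vk + γhat • xk))
    (gk : EuclideanSpace ℝ (Fin n)) (hgk : gk = L • (yk - T yk))
    (vk1 : EuclideanSpace ℝ (Fin n))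
    (hvk1 : vk1 = γhat⁻¹ • ((γ * (1 - α)) • vk - α • gk + (μ * α) • yk))
    (xk1 : EuclideanSpace ℝ (Fin n)) (hxk1 : xk1 = T yk)
    (ε : EReal)
    (hε : ε = ((f xk : EReal) + g xk) - ((f (T yk) : EReal) + g (T yk))
        - ((⟪gk, xk - yk⟫ : ℝ) : EReal) - ((1 / (2 * L) * ‖gk‖ ^ 2 : ℝ) : EReal))
    (Rk1 : EReal)
    (hRk1 : Rk1 = ((1 / 2 * (L⁻¹ - α ^ 2 / γhat) * ‖gk‖ ^ 2 : ℝ) : EReal)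
        + ((1 - α : ℝ) : EReal)
          * (ε + ((Rk + μ * α * γ / (2 * γhat) * ‖vk - yk‖ ^ 2 : ℝ) : EReal))) :
    ∀ xstar : EuclideanSpace ℝ (Fin n),
      ((f xk1 : EReal) + g xk1) - ((f xstar : EReal) + g xstar) + Rk1
          + ((γhat / 2 * ‖vk1 - xstar‖ ^ 2 : ℝ) : EReal)
        ≤ ((1 - α : ℝ) : EReal)
          * (((f xk : EReal) + g xk) - ((f xstar : EReal) + g xstar)
              + ((Rk + γ / 2 * ‖vk - xstar‖ ^ 2 : ℝ) : EReal)) := by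
  intro xstar
  have hpos : 0 < γhat := hγhat ▸ add_pos_of_pos_of_nonneg (mul_pos (sub_pos.2 hα.2) hγ)
    (mul_nonneg hμ hα.1.le)
  exact hxk1 ▸ stmt4_general (hμ.trans_lt hμL) hgrad hlip hsc hg_bot hg_proper hg_conv hα.1.le hα.2
    hγ.le hγhat hpos hyk (hT yk) hgk hvk1 hε hRk1 xstar
end

section
/- Abstract similar triangle form: given x_1, v_1 ∈ ℝ^n and sequences (τ_k)_{k≥1}, (ξ_k)_{k≥1}, (δ_k)_{k≥1} with τ_k, ξ_k ∈ (0, 1), suppose the iterates satisfy for all k ≥ 1: y_k = (1 + τ_k)^{-1}(v_k + τ_k x_k), v_{k+1} = (1 + ξ_k)^{-1}(v_k + ξ_k y_k) − (1 + ξ_k)^{-1} δ_k g_k, x_{k+1} = y_k − L^{-1} g_k, where g_k := G_L(y_k). If 1 + ξ_k + τ_k = L δ_k for all k ≥ 1, then for all k ≥ 1: v_{k+1} − x_{k+1} = (1 + ξ_k)^{-1} τ_k (x_{k+1} − x_k). -/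
open RealInnerProductSpace

/-!
The definition of `y` says that `v`, `y`, `x` are collinear with `v - y = τ • (y - x)`. The
averaging in `v'` scales `v - y` by `(1 + ξ)⁻¹`, so without gradient terms `v' - x'` would be
`((1 + ξ)⁻¹ * τ) • (y - x)`. The coupling `1 + ξ + τ = L * δ` says exactly that the gradient term
of `v' - x'` is `(1 + ξ)⁻¹ * τ` times that of `x' = y - L⁻¹ • G`.
-/

section SimilarTriangle

variable {K E : Type*} [Field K] [AddCommGroup E] [Module K E]

theorem inv_one_add_smul_add_smul_sub {c : K} (hc : 1 + c ≠ 0) (a b : E) :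
    (1 + c)⁻¹ • (a + c • b) - b = (1 + c)⁻¹ • (a - b) := by
  rw [← smul_right_inj hc, smul_sub, smul_inv_smul₀ hc, smul_inv_smul₀ hc, add_smul, one_smul,
    add_sub_add_right_eq_sub]

theorem eq_inv_one_add_smul_add_smul_iff {c : K} (hc : 1 + c ≠ 0) {a b p : E} :
    p = (1 + c)⁻¹ • (a + c • b) ↔ a - p = c • (p - b) := by
  rw [← sub_left_inj (a := b), inv_one_add_smul_add_smul_sub hc, eq_inv_smul_iff₀ hc, add_smul,
    one_smul, ← eq_sub_iff_add_eq', sub_sub_sub_cancel_right, eq_comm]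

theorem inv_mul_sub_inv_of_add_eq_mul {s τ L δ : K} (hs : s ≠ 0) (hL : L ≠ 0)
    (h : s + τ = L * δ) : s⁻¹ * δ - L⁻¹ = s⁻¹ * τ * L⁻¹ := by
  rw [eq_sub_of_add_eq' h]
  field_simp

theorem stmt7_general {L τ ξ δ : K} (hL : L ≠ 0) (hτ : 1 + τ ≠ 0) (hξ : 1 + ξ ≠ 0)
    {x v y x' v' G : E} (hy : y = (1 + τ)⁻¹ • (v + τ • x))
    (hv : v' = (1 + ξ)⁻¹ • (v + ξ • y) - ((1 + ξ)⁻¹ * δ) • G)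
    (hx : x' = y - L⁻¹ • G) (hδ : 1 + ξ + τ = L * δ) :
    v' - x' = ((1 + ξ)⁻¹ * τ) • (x' - x) := by
  have hvy : v - y = τ • (y - x) := (eq_inv_one_add_smul_add_smul_iff hτ).1 hy
  calc
    v' - x' = ((1 + ξ)⁻¹ • (v + ξ • y) - y) - ((1 + ξ)⁻¹ * δ - L⁻¹) • G := by
      rw [hv, hx, sub_smul, sub_sub_sub_comm]
    _ = ((1 + ξ)⁻¹ * τ) • (y - x) - ((1 + ξ)⁻¹ * τ) • L⁻¹ • G := by
      rw [inv_one_add_smul_add_smul_sub hξ, hvy, smul_smul,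
        inv_mul_sub_inv_of_add_eq_mul hξ hL hδ, mul_smul _ L⁻¹]
    _ = ((1 + ξ)⁻¹ * τ) • (x' - x) := by
      rw [← smul_sub, sub_right_comm, ← hx]

end SimilarTriangle

/-- abstract similar triangle form.
Given `x₁, v₁ ∈ ℝⁿ` and sequences `(τ_k), (ξ_k), (δ_k)` with `τ_k, ξ_k ∈ (0,1)`,
suppose for all `k ≥ 1`:
`y_k = (1 + τ_k)⁻¹(v_k + τ_k x_k)`,
`v_{k+1} = (1 + ξ_k)⁻¹(v_k + ξ_k y_k) − (1 + ξ_k)⁻¹ δ_k g_k`,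
`x_{k+1} = y_k − L⁻¹ g_k`, where `g_k := G_L(y_k) = L(y_k − T_L(y_k))`.
If `1 + ξ_k + τ_k = Lδ_k` for all `k ≥ 1`, then for all `k ≥ 1`:
`v_{k+1} − x_{k+1} = (1 + ξ_k)⁻¹ τ_k (x_{k+1} − x_k)`. -/
theorem stmt7 {n : ℕ} (L μ : ℝ) (hL : 0 < L) (hμ : 0 ≤ μ)
    (f : EuclideanSpace ℝ (Fin n) → ℝ)
    (f' : EuclideanSpace ℝ (Fin n) → EuclideanSpace ℝ (Fin n))
    (hgrad : ∀ x, HasGradientAt f (f' x) x)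
    (hlip : ∀ x y, ‖f' x - f' y‖ ≤ L * ‖x - y‖)
    (hsc : ∀ x y, f y + ⟪f' y, x - y⟫ + μ / 2 * ‖x - y‖ ^ 2 ≤ f x)
    (g : EuclideanSpace ℝ (Fin n) → EReal)
    (hg_bot : ∀ x, g x ≠ ⊥) (hg_proper : ∃ x, g x ≠ ⊤)
    (hg_lsc : LowerSemicontinuous g)
    (hg_conv : ∀ x y : EuclideanSpace ℝ (Fin n), ∀ a b : ℝ,
      0 ≤ a → 0 ≤ b → a + b = 1 →
      g (a • x + b • y) ≤ (a : EReal) * g x + (b : EReal) * g y)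
    (T : EuclideanSpace ℝ (Fin n) → EuclideanSpace ℝ (Fin n))
    (hT : ∀ y x, g (T y) + ((⟪f' y, T y⟫ + L / 2 * ‖T y - y‖ ^ 2 : ℝ) : EReal)
        ≤ g x + ((⟪f' y, x⟫ + L / 2 * ‖x - y‖ ^ 2 : ℝ) : EReal))
    (τ ξ δ : ℕ → ℝ)
    (hτ : ∀ k, 1 ≤ k → τ k ∈ Set.Ioo (0 : ℝ) 1)
    (hξ : ∀ k, 1 ≤ k → ξ k ∈ Set.Ioo (0 : ℝ) 1)
    (x v y : ℕ → EuclideanSpace ℝ (Fin n))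
    (hy : ∀ k, 1 ≤ k → y k = (1 + τ k)⁻¹ • (v k + τ k • x k))
    (hv : ∀ k, 1 ≤ k → v (k + 1) = (1 + ξ k)⁻¹ • (v k + ξ k • y k)
        - ((1 + ξ k)⁻¹ * δ k) • (L • (y k - T (y k))))
    (hx : ∀ k, 1 ≤ k → x (k + 1) = y k - L⁻¹ • (L • (y k - T (y k))))
    (hδ : ∀ k, 1 ≤ k → 1 + ξ k + τ k = L * δ k) :
    ∀ k, 1 ≤ k →
      v (k + 1) - x (k + 1) = ((1 + ξ k)⁻¹ * τ k) • (x (k + 1) - x k) :=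
  fun k hk ↦ stmt7_general hL.ne' (by linarith [(hτ k hk).1]) (by linarith [(hξ k hk).1])
    (hy k hk) (hv k hk) (hx k hk) (hδ k hk)
end

section
/- R-WAPG intermediate form: if (y_k, v_k, x_k)_{k≥1} is generated by R-WAPG (γ_k := ρ_{k−1}Lα_{k−1}², γ̂_{k+1} := (1 − α_k)γ_k + μα_k = Lα_k², y_k := (γ_k + α_k μ)^{-1}(α_k γ_k v_k + γ̂_{k+1} x_k), g_k := G_L(y_k), v_{k+1} := γ̂_{k+1}^{-1}(γ_k(1 − α_k)v_k − α_k g_k + μα_k y_k), x_{k+1} := T_L(y_k)) with 0 ≤ μ < L and (α_k), (ρ_k) an R-WAPG sequence pair, then for all k ≥ 1 the iterates satisfy: y_k = (1 + (L − Lα_k)/(Lα_k − μ))^{-1}(v_k + ((L − Lα_k)/(Lα_k − μ)) x_k), x_{k+1} = y_k − L^{-1} G_L(y_k), and v_{k+1} = (1 + μ/(Lα_k − μ))^{-1}(v_k + (μ/(Lα_k − μ)) y_k) − (1/(Lα_k)) G_L(y_k). -/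
open RealInnerProductSpace

/-!
Both `y_k` and the gradient-free part of `v_{k+1}` are weighted averages, and an average with
weights `p`, `q` depends only on the ratio `q / p`. The relation defining `ρ` says
`(1 - α_k) γ_k = α_k (L α_k - μ)`, whence `γ̂_{k+1} = L α_k²`. The weights of `y_k` are therefore
`α_k γ_k` and `L α_k²`, with sum `γ_k + α_k μ`, and those of `v_{k+1}` are `α_k (L α_k - μ)` and
`μ α_k`, with sum `γ̂_{k+1}`; the stated coefficients are the two ratios.
-/

theorem inv_add_smul_smul_add_smul {K E : Type*} [Semifield K] [AddCommMonoid E] [Module K E]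
    {p : K} (hp : p ≠ 0) (q : K) (u w : E) :
    (p + q)⁻¹ • (p • u + q • w) = (1 + q / p)⁻¹ • (u + (q / p) • w) := by
  have hweight : p + q = (1 + q / p) * p := by rw [add_mul, one_mul, div_mul_cancel₀ q hp]
  have hvector : p • u + q • w = p • (u + (q / p) • w) := by
    rw [smul_add, smul_smul, mul_div_cancel₀ q hp]
  rw [hweight, hvector, smul_smul, mul_inv, inv_mul_cancel_right₀ hp]

/-- The gradient mapping `G_L(y) = L (y - T_L(y))`, which plays the role of the gradient in the
algorithm, with an arbitrary operator `T` in place of the proximal gradient operator `T_L`. -/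
def gradientMapping {K E : Type*} [SMul K E] [Sub E] (L : K) (T : E → E) (y : E) : E :=
  L • (y - T y)

theorem sub_inv_smul_gradientMapping {K E : Type*} [DivisionRing K] [AddCommGroup E] [Module K E]
    {L : K} (hL : L ≠ 0) (T : E → E) (y : E) :
    y - L⁻¹ • gradientMapping L T y = T y := by
  rw [gradientMapping, inv_smul_smul₀ hL, sub_sub_cancel]

/-- An R-WAPG sequence pair: the parameters `α` of the algorithm, together with the ratios `ρ`
that they determine. -/
structure IsRWAPGPair {K : Type*} [Field K] [LinearOrder K] (L μ : K) (α ρ : ℕ → K) : Prop where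
  zero_mem : α 0 ∈ Set.Ioc 0 1
  mem : ∀ k, 1 ≤ k → α k ∈ Set.Ioo (μ / L) 1
  ratio_eq : ∀ k, ρ k = (α (k + 1) ^ 2 - μ / L * α (k + 1)) / ((1 - α (k + 1)) * α k ^ 2)

/-- The recursion of R-WAPG for the iterates `x`, `v`, `y` and the curvature parameters `γ`, `γ̂`.
It holds from index `1` on, and `γ̂` is indexed as in `γ̂_{k+1}`. -/
structure IsRWAPG {K E : Type*} [Field K] [AddCommGroup E] [Module K E] (L μ : K) (T : E → E)
    (α ρ : ℕ → K) (x v y : ℕ → E) (γ γhat : ℕ → K) : Prop where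
  gamma_eq : ∀ k, 1 ≤ k → γ k = ρ (k - 1) * L * α (k - 1) ^ 2
  gammaHat_succ : ∀ k, 1 ≤ k → γhat (k + 1) = (1 - α k) * γ k + μ * α k
  y_eq : ∀ k, 1 ≤ k →
    y k = (γ k + α k * μ)⁻¹ • ((α k * γ k) • v k + γhat (k + 1) • x k)
  v_succ : ∀ k, 1 ≤ k → v (k + 1) = (γhat (k + 1))⁻¹ •
    ((γ k * (1 - α k)) • v k - α k • gradientMapping L T (y k) + (μ * α k) • y k)
  x_succ : ∀ k, 1 ≤ k → x (k + 1) = T (y k)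

theorem IsRWAPG.x_succ_eq_sub {K E : Type*} [Field K] [AddCommGroup E] [Module K E] {L μ : K}
    {T : E → E} {α ρ : ℕ → K} {x v y : ℕ → E} {γ γhat : ℕ → K}
    (h : IsRWAPG L μ T α ρ x v y γ γhat) (hL : L ≠ 0) {k : ℕ} (hk : 1 ≤ k) :
    x (k + 1) = y k - L⁻¹ • gradientMapping L T (y k) := by
  rw [h.x_succ k hk, sub_inv_smul_gradientMapping hL]

section

variable {K : Type*} [Field K] [LinearOrder K] [IsStrictOrderedRing K] {L μ : K} {α ρ : ℕ → K}

namespace IsRWAPGPair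

theorem pos (h : IsRWAPGPair L μ α ρ) (hμ : 0 ≤ μ) (hL : 0 < L) (k : ℕ) : 0 < α k := by
  rcases Nat.eq_zero_or_pos k with rfl | hk
  · exact h.zero_mem.1
  · exact (div_nonneg hμ hL.le).trans_lt (h.mem k hk).1

theorem one_sub_pos (h : IsRWAPGPair L μ α ρ) {k : ℕ} (hk : 1 ≤ k) : 0 < 1 - α k :=
  sub_pos.2 (h.mem k hk).2

theorem mul_sub_pos (h : IsRWAPGPair L μ α ρ) (hL : 0 < L) {k : ℕ} (hk : 1 ≤ k) :
    0 < L * α k - μ :=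
  sub_pos.2 ((div_lt_iff₀' hL).1 (h.mem k hk).1)

theorem one_sub_mul_ratio_mul_sq (h : IsRWAPGPair L μ α ρ) (hμ : 0 ≤ μ) (hL : 0 < L) (k : ℕ) :
    (1 - α (k + 1)) * (ρ k * α k ^ 2) = α (k + 1) ^ 2 - μ / L * α (k + 1) := by
  have hdenom : (1 - α (k + 1)) * α k ^ 2 ≠ 0 :=
    (mul_pos (h.one_sub_pos k.succ_pos) (pow_pos (h.pos hμ hL k) 2)).ne'
  rw [mul_left_comm, h.ratio_eq, div_mul_cancel₀ _ hdenom]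

end IsRWAPGPair

namespace IsRWAPG

variable {E : Type*} [AddCommGroup E] [Module K E] {T : E → E} {x v y : ℕ → E} {γ γhat : ℕ → K}

theorem one_sub_mul_gamma (h : IsRWAPG L μ T α ρ x v y γ γhat) (hα : IsRWAPGPair L μ α ρ)
    (hμ : 0 ≤ μ) (hL : 0 < L) {k : ℕ} (hk : 1 ≤ k) :
    (1 - α k) * γ k = α k * (L * α k - μ) := by
  obtain ⟨j, rfl⟩ := Nat.exists_eq_add_of_le' hk
  calc (1 - α (j + 1)) * γ (j + 1)
      = L * ((1 - α (j + 1)) * (ρ j * α j ^ 2)) := by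
        rw [h.gamma_eq _ hk, Nat.add_sub_cancel]; ring
    _ = L * (α (j + 1) ^ 2 - μ / L * α (j + 1)) := by rw [hα.one_sub_mul_ratio_mul_sq hμ hL]
    _ = α (j + 1) * (L * α (j + 1) - μ) := by field_simp

theorem gamma_ne_zero (h : IsRWAPG L μ T α ρ x v y γ γhat) (hα : IsRWAPGPair L μ α ρ)
    (hμ : 0 ≤ μ) (hL : 0 < L) {k : ℕ} (hk : 1 ≤ k) : γ k ≠ 0 := by
  refine right_ne_zero_of_mul (a := 1 - α k) ?_
  rw [h.one_sub_mul_gamma hα hμ hL hk]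
  exact (mul_pos (hα.pos hμ hL k) (hα.mul_sub_pos hL hk)).ne'

theorem gammaHat_succ_eq_mul_sq (h : IsRWAPG L μ T α ρ x v y γ γhat)
    (hα : IsRWAPGPair L μ α ρ) (hμ : 0 ≤ μ) (hL : 0 < L) {k : ℕ} (hk : 1 ≤ k) :
    γhat (k + 1) = L * α k ^ 2 := by
  rw [h.gammaHat_succ k hk, h.one_sub_mul_gamma hα hμ hL hk]
  ring

theorem y_eq_average (h : IsRWAPG L μ T α ρ x v y γ γhat) (hα : IsRWAPGPair L μ α ρ)
    (hμ : 0 ≤ μ) (hL : 0 < L) {k : ℕ} (hk : 1 ≤ k) :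
    y k = (1 + (L - L * α k) / (L * α k - μ))⁻¹ •
      (v k + ((L - L * α k) / (L * α k - μ)) • x k) := by
  have hγ := h.one_sub_mul_gamma hα hμ hL hk
  have hweight : α k * γ k ≠ 0 :=
    mul_ne_zero (hα.pos hμ hL k).ne' (h.gamma_ne_zero hα hμ hL hk)
  have hsum : γ k + α k * μ = α k * γ k + L * α k ^ 2 := by linear_combination hγ
  have hratio : L * α k ^ 2 / (α k * γ k) = (L - L * α k) / (L * α k - μ) := by
    rw [div_eq_div_iff hweight (hα.mul_sub_pos hL hk).ne']
    linear_combination -(L * α k) * hγ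
  rw [h.y_eq k hk, h.gammaHat_succ_eq_mul_sq hα hμ hL hk, hsum,
    inv_add_smul_smul_add_smul hweight, hratio]

theorem v_succ_eq_average_sub (h : IsRWAPG L μ T α ρ x v y γ γhat) (hα : IsRWAPGPair L μ α ρ)
    (hμ : 0 ≤ μ) (hL : 0 < L) {k : ℕ} (hk : 1 ≤ k) :
    v (k + 1) = (1 + μ / (L * α k - μ))⁻¹ • (v k + (μ / (L * α k - μ)) • y k)
      - (1 / (L * α k)) • gradientMapping L T (y k) := by
  have hαk : α k ≠ 0 := (hα.pos hμ hL k).ne'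
  have hweight : α k * (L * α k - μ) ≠ 0 := mul_ne_zero hαk (hα.mul_sub_pos hL hk).ne'
  have hsum : γhat (k + 1) = α k * (L * α k - μ) + μ * α k := by
    rw [h.gammaHat_succ k hk, h.one_sub_mul_gamma hα hμ hL hk]
  have hratio : μ * α k / (α k * (L * α k - μ)) = μ / (L * α k - μ) := by
    rw [mul_comm μ, mul_div_mul_left _ _ hαk]
  have hstep : (γhat (k + 1))⁻¹ * α k = 1 / (L * α k) := by
    rw [h.gammaHat_succ_eq_mul_sq hα hμ hL hk]
    field_simp
  rw [h.v_succ k hk, mul_comm (γ k), h.one_sub_mul_gamma hα hμ hL hk, sub_add_eq_add_sub,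
    smul_sub, smul_smul _ (α k), hstep, hsum, inv_add_smul_smul_add_smul hweight, hratio]

end IsRWAPG

theorem stmt8_general {E : Type*} [AddCommGroup E] [Module K E] {T : E → E} {x v y : ℕ → E}
    {γ γhat : ℕ → K} (hμ : 0 ≤ μ) (hL : 0 < L) (hα : IsRWAPGPair L μ α ρ)
    (h : IsRWAPG L μ T α ρ x v y γ γhat) (k : ℕ) (hk : 1 ≤ k) :
    y k = (1 + (L - L * α k) / (L * α k - μ))⁻¹ •
        (v k + ((L - L * α k) / (L * α k - μ)) • x k)
      ∧ x (k + 1) = y k - L⁻¹ • gradientMapping L T (y k)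
      ∧ v (k + 1) = (1 + μ / (L * α k - μ))⁻¹ •
          (v k + (μ / (L * α k - μ)) • y k)
        - (1 / (L * α k)) • gradientMapping L T (y k) :=
  ⟨h.y_eq_average hα hμ hL hk, h.x_succ_eq_sub hL.ne' hk, h.v_succ_eq_average_sub hα hμ hL hk⟩

end

/-- R-WAPG intermediate form.
If `(y_k, v_k, x_k)` is generated by R-WAPG (`γ_k := ρ_{k−1}Lα_{k−1}²`,
`γ̂_{k+1} := (1 − α_k)γ_k + μα_k`, `y_k := (γ_k + α_kμ)⁻¹(α_kγ_k v_k + γ̂_{k+1} x_k)`,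
`g_k := G_L(y_k) = L(y_k − T_L(y_k))`,
`v_{k+1} := γ̂_{k+1}⁻¹(γ_k(1 − α_k)v_k − α_k g_k + μα_k y_k)`, `x_{k+1} := T_L(y_k)`)
with `0 ≤ μ < L` and `(α_k), (ρ_k)` an R-WAPG sequence pair, then for all `k ≥ 1`:
`y_k = (1 + (L − Lα_k)/(Lα_k − μ))⁻¹(v_k + ((L − Lα_k)/(Lα_k − μ))x_k)`,
`x_{k+1} = y_k − L⁻¹G_L(y_k)`, and
`v_{k+1} = (1 + μ/(Lα_k − μ))⁻¹(v_k + (μ/(Lα_k − μ))y_k) − (1/(Lα_k))G_L(y_k)`. -/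
theorem stmt8 {n : ℕ} (L μ : ℝ) (hμ : 0 ≤ μ) (hμL : μ < L)
    (f : EuclideanSpace ℝ (Fin n) → ℝ)
    (f' : EuclideanSpace ℝ (Fin n) → EuclideanSpace ℝ (Fin n))
    (hgrad : ∀ x, HasGradientAt f (f' x) x)
    (hlip : ∀ x y, ‖f' x - f' y‖ ≤ L * ‖x - y‖)
    (hsc : ∀ x y, f y + ⟪f' y, x - y⟫ + μ / 2 * ‖x - y‖ ^ 2 ≤ f x)
    (g : EuclideanSpace ℝ (Fin n) → EReal)
    (hg_bot : ∀ x, g x ≠ ⊥) (hg_proper : ∃ x, g x ≠ ⊤)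
    (hg_lsc : LowerSemicontinuous g)
    (hg_conv : ∀ x y : EuclideanSpace ℝ (Fin n), ∀ a b : ℝ,
      0 ≤ a → 0 ≤ b → a + b = 1 →
      g (a • x + b • y) ≤ (a : EReal) * g x + (b : EReal) * g y)
    (T : EuclideanSpace ℝ (Fin n) → EuclideanSpace ℝ (Fin n))
    (hT : ∀ y x, g (T y) + ((⟪f' y, T y⟫ + L / 2 * ‖T y - y‖ ^ 2 : ℝ) : EReal)
        ≤ g x + ((⟪f' y, x⟫ + L / 2 * ‖x - y‖ ^ 2 : ℝ) : EReal))
    (α ρ : ℕ → ℝ)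
    (hα0 : α 0 ∈ Set.Ioc (0 : ℝ) 1)
    (hαk : ∀ k, 1 ≤ k → α k ∈ Set.Ioo (μ / L) 1)
    (hρ : ∀ k, ρ k = ((α (k + 1)) ^ 2 - μ / L * α (k + 1)) /
        ((1 - α (k + 1)) * (α k) ^ 2))
    (x v y : ℕ → EuclideanSpace ℝ (Fin n)) (γ γhat : ℕ → ℝ)
    (hγ : ∀ k, 1 ≤ k → γ k = ρ (k - 1) * L * (α (k - 1)) ^ 2)
    (hγhat : ∀ k, 1 ≤ k → γhat (k + 1) = (1 - α k) * γ k + μ * α k)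
    (hy : ∀ k, 1 ≤ k →
      y k = (γ k + α k * μ)⁻¹ • ((α k * γ k) • v k + γhat (k + 1) • x k))
    (hv : ∀ k, 1 ≤ k → v (k + 1) = (γhat (k + 1))⁻¹ •
        ((γ k * (1 - α k)) • v k - α k • (L • (y k - T (y k))) + (μ * α k) • y k))
    (hx : ∀ k, 1 ≤ k → x (k + 1) = T (y k)) :
    ∀ k, 1 ≤ k →
      y k = (1 + (L - L * α k) / (L * α k - μ))⁻¹ •
          (v k + ((L - L * α k) / (L * α k - μ)) • x k)
        ∧ x (k + 1) = y k - L⁻¹ • (L • (y k - T (y k)))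
        ∧ v (k + 1) = (1 + μ / (L * α k - μ))⁻¹ •
            (v k + (μ / (L * α k - μ)) • y k)
          - (1 / (L * α k)) • (L • (y k - T (y k))) :=
  stmt8_general hμ (hμ.trans_lt hμL) ⟨hα0, hαk, hρ⟩ ⟨hγ, hγhat, hy, hv, hx⟩
end

section
/- R-WAPG similar triangle form: let 0 ≤ μ < L, let (α_k) be an R-WAPG sequence, and suppose for all k ≥ 1 the iterates satisfy the intermediate form y_k = (1 + (L − Lα_k)/(Lα_k − μ))^{-1}(v_k + ((L − Lα_k)/(Lα_k − μ)) x_k), x_{k+1} = y_k − L^{-1} G_L(y_k), v_{k+1} = (1 + μ/(Lα_k − μ))^{-1}(v_k + (μ/(Lα_k − μ)) y_k) − (1/(Lα_k)) G_L(y_k). Then for all k ≥ 1: v_{k+1} = x_{k+1} + (α_k^{-1} − 1)(x_{k+1} − x_k). -/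
open RealInnerProductSpace

/-! With the denominators cleared, the three updates read `(L - μ) y = (Lα - μ) v + L (1 - α) x`,
`L x' = L y - G` and `Lα v' = (Lα - μ) v + μ y - G`. Eliminating `v`, `y` and `G` leaves
`x' = α v' + (1 - α) x`, so `v'` is the extrapolation of `x'` away from `x`. -/

section Module

variable {K E : Type*} [Field K] [AddCommGroup E] [Module K E]

lemma inv_one_add_div_smul_add_div_smul (c : K) {d : K} (hd : d ≠ 0) (u w : E) :
    (1 + c / d)⁻¹ • (u + (c / d) • w) = (d + c)⁻¹ • (d • u + c • w) := by
  have hsum : 1 + c / d = d⁻¹ * (d + c) := by field_simp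
  have hcomb : u + (c / d) • w = d⁻¹ • (d • u + c • w) := by
    rw [smul_add, inv_smul_smul₀ hd, smul_smul, div_eq_inv_mul]
  rw [hsum, hcomb, mul_inv_rev, mul_smul, inv_smul_smul₀ (inv_ne_zero hd)]

lemma eq_add_inv_sub_one_smul_sub_iff {a : K} (ha : a ≠ 0) {u w z : E} :
    w = z + (a⁻¹ - 1) • (z - u) ↔ z = a • w + (1 - a) • u := by
  have hscaled : a • (z + (a⁻¹ - 1) • (z - u)) = z - (1 - a) • u := by
    match_scalars <;> field_simp
    ring
  rw [← smul_right_inj ha, hscaled, eq_sub_iff_add_eq, eq_comm]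

theorem stmt9_general {L μ α : K} (hL : L ≠ 0) (hα : α ≠ 0) (hμL : L ≠ μ) (hμα : L * α ≠ μ)
    {x v y G x' v' : E}
    (hy : y = (1 + (L - L * α) / (L * α - μ))⁻¹ • (v + ((L - L * α) / (L * α - μ)) • x))
    (hx : x' = y - L⁻¹ • G)
    (hv : v' = (1 + μ / (L * α - μ))⁻¹ • (v + (μ / (L * α - μ)) • y) - (1 / (L * α)) • G) :
    v' = x' + (α⁻¹ - 1) • (x' - x) := by
  have hd : L * α - μ ≠ 0 := sub_ne_zero.2 hμα
  have hy_cleared : (L - μ) • y = (L * α - μ) • v + (L - L * α) • x := by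
    rw [inv_one_add_div_smul_add_div_smul _ hd, add_comm, sub_add_sub_cancel] at hy
    rw [hy, smul_inv_smul₀ (sub_ne_zero.2 hμL), add_comm]
  have hx_cleared : L • x' = L • y - G := by
    rw [hx, smul_sub, smul_inv_smul₀ hL]
  have hv_cleared : (L * α) • v' = (L * α - μ) • v + μ • y - G := by
    rw [inv_one_add_div_smul_add_div_smul _ hd, sub_add_cancel, one_div, ← smul_sub] at hv
    rw [hv, smul_inv_smul₀ (mul_ne_zero hL hα)]
  refine (eq_add_inv_sub_one_smul_sub_iff hα).2 (smul_right_injective E hL ?_)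
  calc
    L • x' = L • y - G := hx_cleared
    _ = (L - μ) • y + μ • y - G := by module
    _ = (L * α - μ) • v + (L - L * α) • x + μ • y - G := by rw [hy_cleared]
    _ = (L * α) • v' + (L - L * α) • x := by rw [hv_cleared]; abel
    _ = L • (α • v' + (1 - α) • x) := by module

end Module

/-- R-WAPG similar triangle form.
Let `0 ≤ μ < L`, let `(α_k)` be an R-WAPG sequence, and suppose for all `k ≥ 1` the
iterates satisfy the intermediate form
`y_k = (1 + (L − Lα_k)/(Lα_k − μ))⁻¹(v_k + ((L − Lα_k)/(Lα_k − μ))x_k)`,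
`x_{k+1} = y_k − L⁻¹G_L(y_k)`,
`v_{k+1} = (1 + μ/(Lα_k − μ))⁻¹(v_k + (μ/(Lα_k − μ))y_k) − (1/(Lα_k))G_L(y_k)`.
Then for all `k ≥ 1`: `v_{k+1} = x_{k+1} + (α_k⁻¹ − 1)(x_{k+1} − x_k)`. -/
theorem stmt9 {n : ℕ} (L μ : ℝ) (hμ : 0 ≤ μ) (hμL : μ < L)
    (f : EuclideanSpace ℝ (Fin n) → ℝ)
    (f' : EuclideanSpace ℝ (Fin n) → EuclideanSpace ℝ (Fin n))
    (hgrad : ∀ x, HasGradientAt f (f' x) x)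
    (hlip : ∀ x y, ‖f' x - f' y‖ ≤ L * ‖x - y‖)
    (hsc : ∀ x y, f y + ⟪f' y, x - y⟫ + μ / 2 * ‖x - y‖ ^ 2 ≤ f x)
    (g : EuclideanSpace ℝ (Fin n) → EReal)
    (hg_bot : ∀ x, g x ≠ ⊥) (hg_proper : ∃ x, g x ≠ ⊤)
    (hg_lsc : LowerSemicontinuous g)
    (hg_conv : ∀ x y : EuclideanSpace ℝ (Fin n), ∀ a b : ℝ,
      0 ≤ a → 0 ≤ b → a + b = 1 →
      g (a • x + b • y) ≤ (a : EReal) * g x + (b : EReal) * g y)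
    (T : EuclideanSpace ℝ (Fin n) → EuclideanSpace ℝ (Fin n))
    (hT : ∀ y x, g (T y) + ((⟪f' y, T y⟫ + L / 2 * ‖T y - y‖ ^ 2 : ℝ) : EReal)
        ≤ g x + ((⟪f' y, x⟫ + L / 2 * ‖x - y‖ ^ 2 : ℝ) : EReal))
    (α : ℕ → ℝ)
    (hα0 : α 0 ∈ Set.Ioc (0 : ℝ) 1)
    (hαk : ∀ k, 1 ≤ k → α k ∈ Set.Ioo (μ / L) 1)
    (x v y : ℕ → EuclideanSpace ℝ (Fin n))
    (hy : ∀ k, 1 ≤ k → y k = (1 + (L - L * α k) / (L * α k - μ))⁻¹ •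
        (v k + ((L - L * α k) / (L * α k - μ)) • x k))
    (hx : ∀ k, 1 ≤ k → x (k + 1) = y k - L⁻¹ • (L • (y k - T (y k))))
    (hv : ∀ k, 1 ≤ k → v (k + 1) = (1 + μ / (L * α k - μ))⁻¹ •
        (v k + (μ / (L * α k - μ)) • y k)
      - (1 / (L * α k)) • (L • (y k - T (y k)))) :
    ∀ k, 1 ≤ k →
      v (k + 1) = x (k + 1) + ((α k)⁻¹ - 1) • (x (k + 1) - x k) := by
  intro k hk
  have hL : 0 < L := hμ.trans_lt hμL
  have hα : 0 < α k := (div_nonneg hμ hL.le).trans_lt (hαk k hk).1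
  have hμα : μ < L * α k := (div_lt_iff₀' hL).1 (hαk k hk).1
  exact stmt9_general hL.ne' hα.ne' hμL.ne' hμα.ne' (hy k hk) (hx k hk) (hv k hk)
end

section
/- R-WAPG momentum form: let 0 ≤ μ < L, let (α_k), (ρ_k) be an R-WAPG sequence pair, and suppose for all k ≥ 1 the iterates satisfy the similar triangle form: y_k = (1 + (L − Lα_k)/(Lα_k − μ))^{-1}(v_k + ((L − Lα_k)/(Lα_k − μ)) x_k), x_{k+1} = y_k − L^{-1} G_L(y_k), v_{k+1} = x_{k+1} + (α_k^{-1} − 1)(x_{k+1} − x_k). Then for all k ≥ 1: y_{k+1} = x_{k+1} + ((Lα_{k+1} − μ)(α_k^{-1} − 1)/(L − μ))(x_{k+1} − x_k), and moreover the momentum coefficient satisfies (Lα_{k+1} − μ)(α_k^{-1} − 1)/(L − μ) = ρ_k α_k (1 − α_k)/(ρ_k α_k² + α_{k+1}). -/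
open RealInnerProductSpace

/-!
The weights of `v` and `x` in the definition of `y` are barycentric, with total
`1 + (L - L b) / (L b - μ) = (L - μ) / (L b - μ)` for `b = α_{k+1}`. Writing `v_{k+1}` as `x_{k+1}`
plus a multiple of the step `x_{k+1} - x_k`, the barycentre keeps the base point `x_{k+1}` and
divides that multiple by the total weight.

For the coefficient, put `a = α_k`. The definition of `ρ` gives `ρ a² = b (b - μ / L) / (1 - b)`,
hence `ρ a² + b = b (1 - μ / L) / (1 - b)`; their quotient is `(L b - μ) / (L - μ)`, and
`ρ a (1 - a) = ρ a² (a⁻¹ - 1)`.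
-/

section

variable {K E : Type*} [Field K] [AddCommGroup E] [Module K E] {L μ a b : K}

/-- The ratio `ρ_k` of an R-WAPG sequence pair, where `a = α_k` and `b = α_{k+1}`. -/
def rwapgRatio (L μ a b : K) : K := (b ^ 2 - μ / L * b) / ((1 - b) * a ^ 2)

/-- The weight of `x_k` relative to `v_k` in the similar triangle form of `y_k`,
where `a = α_k`. -/
def similarTriangleWeight (L μ a : K) : K := (L - L * a) / (L * a - μ)

/-- The coefficient of the momentum term `x_{k+1} - x_k` in `y_{k+1}`,
where `a = α_k` and `b = α_{k+1}`. -/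
def momentumCoeff (L μ a b : K) : K := (L * b - μ) * (a⁻¹ - 1) / (L - μ)

lemma inv_one_add_smul_add_add_smul {t : K} (ht : 1 + t ≠ 0) (p d : E) :
    (1 + t)⁻¹ • (p + d + t • p) = p + (1 + t)⁻¹ • d := by
  rw [inv_smul_eq_iff₀ ht, smul_add, smul_inv_smul₀ ht, add_smul, one_smul]
  abel

lemma one_add_similarTriangleWeight (ha : L * a ≠ μ) :
    1 + similarTriangleWeight L μ a = (L - μ) / (L * a - μ) := by
  rw [similarTriangleWeight, one_add_div (sub_ne_zero.2 ha)]
  ring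

lemma similarTriangle_eq_add_momentumCoeff_smul (hLμ : L ≠ μ) (hb : L * b ≠ μ) (a : K) (p d : E) :
    (1 + similarTriangleWeight L μ b)⁻¹ •
        (p + (a⁻¹ - 1) • d + similarTriangleWeight L μ b • p) =
      p + momentumCoeff L μ a b • d := by
  have weight_eq := one_add_similarTriangleWeight hb
  have weight_ne_zero : 1 + similarTriangleWeight L μ b ≠ 0 :=
    weight_eq ▸ div_ne_zero (sub_ne_zero.2 hLμ) (sub_ne_zero.2 hb)
  rw [inv_one_add_smul_add_add_smul weight_ne_zero, weight_eq, inv_div, smul_smul, momentumCoeff,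
    div_mul_eq_mul_div]

lemma rwapgRatio_mul_sq (ha : a ≠ 0) :
    rwapgRatio L μ a b * a ^ 2 = b / (1 - b) * (b - μ / L) := by
  rw [rwapgRatio, ← div_div, div_mul_cancel₀ _ (pow_ne_zero 2 ha)]
  ring

lemma rwapgRatio_mul_sq_add (ha : a ≠ 0) (hb : b ≠ 1) :
    rwapgRatio L μ a b * a ^ 2 + b = b / (1 - b) * (1 - μ / L) := by
  have one_sub_ne_zero : 1 - b ≠ 0 := sub_ne_zero.2 hb.symm
  calc rwapgRatio L μ a b * a ^ 2 + b
      = b / (1 - b) * (b - μ / L) + b / (1 - b) * (1 - b) := by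
        rw [rwapgRatio_mul_sq ha, div_mul_cancel₀ b one_sub_ne_zero]
    _ = b / (1 - b) * (1 - μ / L) := by ring

lemma rwapgRatio_mul_sq_div (hL : L ≠ 0) (ha : a ≠ 0) (hb₀ : b ≠ 0) (hb₁ : b ≠ 1) :
    rwapgRatio L μ a b * a ^ 2 / (rwapgRatio L μ a b * a ^ 2 + b) = (L * b - μ) / (L - μ) := by
  have factor_ne_zero : b / (1 - b) ≠ 0 := div_ne_zero hb₀ (sub_ne_zero.2 hb₁.symm)
  rw [rwapgRatio_mul_sq_add ha hb₁, rwapgRatio_mul_sq ha, mul_div_mul_left _ _ factor_ne_zero,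
    ← mul_div_mul_left _ _ hL, mul_sub, mul_sub, mul_one, mul_div_cancel₀ _ hL]

lemma momentumCoeff_eq_rwapgRatio (hL : L ≠ 0) (ha : a ≠ 0) (hb₀ : b ≠ 0) (hb₁ : b ≠ 1) :
    momentumCoeff L μ a b =
      rwapgRatio L μ a b * a * (1 - a) / (rwapgRatio L μ a b * a ^ 2 + b) := by
  have numerator_eq (r : K) : r * a ^ 2 * (a⁻¹ - 1) = r * a * (1 - a) := by
    field_simp
  calc momentumCoeff L μ a b
      = (L * b - μ) / (L - μ) * (a⁻¹ - 1) := by rw [momentumCoeff, div_mul_eq_mul_div]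
    _ = rwapgRatio L μ a b * a ^ 2 / (rwapgRatio L μ a b * a ^ 2 + b) * (a⁻¹ - 1) := by
        rw [rwapgRatio_mul_sq_div hL ha hb₀ hb₁]
    _ = rwapgRatio L μ a b * a * (1 - a) / (rwapgRatio L μ a b * a ^ 2 + b) := by
        rw [div_mul_eq_mul_div, numerator_eq]

theorem stmt10_general (hL : L ≠ 0) (hLμ : L ≠ μ) {α ρ : ℕ → K}
    (hα₀ : ∀ k, 1 ≤ k → α k ≠ 0) (hα₁ : ∀ k, 1 ≤ k → α k ≠ 1)
    (hαμ : ∀ k, 1 ≤ k → L * α k ≠ μ)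
    (hρ : ∀ k, ρ k = rwapgRatio L μ (α k) (α (k + 1))) {x v y : ℕ → E}
    (hy : ∀ k, 1 ≤ k → y k = (1 + similarTriangleWeight L μ (α k))⁻¹ •
      (v k + similarTriangleWeight L μ (α k) • x k))
    (hv : ∀ k, 1 ≤ k → v (k + 1) = x (k + 1) + ((α k)⁻¹ - 1) • (x (k + 1) - x k)) :
    ∀ k, 1 ≤ k →
      y (k + 1) = x (k + 1) + momentumCoeff L μ (α k) (α (k + 1)) • (x (k + 1) - x k) ∧
        momentumCoeff L μ (α k) (α (k + 1)) =
          ρ k * α k * (1 - α k) / (ρ k * α k ^ 2 + α (k + 1)) := by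
  intro k hk
  have hk' : 1 ≤ k + 1 := Nat.le_add_left 1 k
  constructor
  · rw [hy (k + 1) hk', hv k hk, similarTriangle_eq_add_momentumCoeff_smul hLμ (hαμ (k + 1) hk')]
  · rw [hρ k, momentumCoeff_eq_rwapgRatio hL (hα₀ k hk) (hα₀ (k + 1) hk') (hα₁ (k + 1) hk')]

end

/-- R-WAPG momentum form.
Let `0 ≤ μ < L`, let `(α_k), (ρ_k)` be an R-WAPG sequence pair, and suppose for all
`k ≥ 1` the iterates satisfy the similar triangle form
`y_k = (1 + (L − Lα_k)/(Lα_k − μ))⁻¹(v_k + ((L − Lα_k)/(Lα_k − μ))x_k)`,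
`x_{k+1} = y_k − L⁻¹G_L(y_k)`, `v_{k+1} = x_{k+1} + (α_k⁻¹ − 1)(x_{k+1} − x_k)`.
Then for all `k ≥ 1`:
`y_{k+1} = x_{k+1} + ((Lα_{k+1} − μ)(α_k⁻¹ − 1)/(L − μ))(x_{k+1} − x_k)`,
and the momentum coefficient satisfies
`(Lα_{k+1} − μ)(α_k⁻¹ − 1)/(L − μ) = ρ_kα_k(1 − α_k)/(ρ_kα_k² + α_{k+1})`. -/
theorem stmt10 {n : ℕ} (L μ : ℝ) (hμ : 0 ≤ μ) (hμL : μ < L)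
    (f : EuclideanSpace ℝ (Fin n) → ℝ)
    (f' : EuclideanSpace ℝ (Fin n) → EuclideanSpace ℝ (Fin n))
    (hgrad : ∀ x, HasGradientAt f (f' x) x)
    (hlip : ∀ x y, ‖f' x - f' y‖ ≤ L * ‖x - y‖)
    (hsc : ∀ x y, f y + ⟪f' y, x - y⟫ + μ / 2 * ‖x - y‖ ^ 2 ≤ f x)
    (g : EuclideanSpace ℝ (Fin n) → EReal)
    (hg_bot : ∀ x, g x ≠ ⊥) (hg_proper : ∃ x, g x ≠ ⊤)
    (hg_lsc : LowerSemicontinuous g)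
    (hg_conv : ∀ x y : EuclideanSpace ℝ (Fin n), ∀ a b : ℝ,
      0 ≤ a → 0 ≤ b → a + b = 1 →
      g (a • x + b • y) ≤ (a : EReal) * g x + (b : EReal) * g y)
    (T : EuclideanSpace ℝ (Fin n) → EuclideanSpace ℝ (Fin n))
    (hT : ∀ y x, g (T y) + ((⟪f' y, T y⟫ + L / 2 * ‖T y - y‖ ^ 2 : ℝ) : EReal)
        ≤ g x + ((⟪f' y, x⟫ + L / 2 * ‖x - y‖ ^ 2 : ℝ) : EReal))
    (α ρ : ℕ → ℝ)
    (hα0 : α 0 ∈ Set.Ioc (0 : ℝ) 1)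
    (hαk : ∀ k, 1 ≤ k → α k ∈ Set.Ioo (μ / L) 1)
    (hρ : ∀ k, ρ k = ((α (k + 1)) ^ 2 - μ / L * α (k + 1)) /
        ((1 - α (k + 1)) * (α k) ^ 2))
    (x v y : ℕ → EuclideanSpace ℝ (Fin n))
    (hy : ∀ k, 1 ≤ k → y k = (1 + (L - L * α k) / (L * α k - μ))⁻¹ •
        (v k + ((L - L * α k) / (L * α k - μ)) • x k))
    (hx : ∀ k, 1 ≤ k → x (k + 1) = y k - L⁻¹ • (L • (y k - T (y k))))
    (hv : ∀ k, 1 ≤ k →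
      v (k + 1) = x (k + 1) + ((α k)⁻¹ - 1) • (x (k + 1) - x k)) :
    ∀ k, 1 ≤ k →
      y (k + 1) = x (k + 1)
          + ((L * α (k + 1) - μ) * ((α k)⁻¹ - 1) / (L - μ)) • (x (k + 1) - x k)
        ∧ (L * α (k + 1) - μ) * ((α k)⁻¹ - 1) / (L - μ)
          = ρ k * α k * (1 - α k) / (ρ k * (α k) ^ 2 + α (k + 1)) := by
  have hL : 0 < L := hμ.trans_lt hμL
  exact stmt10_general hL.ne' hμL.ne'
    (fun k hk ↦ ((div_nonneg hμ hL.le).trans_lt (hαk k hk).1).ne') (fun k hk ↦ (hαk k hk).2.ne)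
    (fun k hk ↦ ((div_lt_iff₀' hL).1 (hαk k hk).1).ne') hρ hy hv
end

section
/- Chambolle–Dossal sequence validity: fix a ≥ 2 and define α_k := a/(k + a) and ρ_k := (k + a)²/((k + 1)(k + a + 1)) for all k ≥ 0. Then (with μ = 0) the pair satisfies the R-WAPG relation α_{k+1}² = (1 − α_{k+1})ρ_k α_k² for all k ≥ 0, and moreover ρ_k ≥ 1 for all k ≥ 0. -/
/-!
Since `1 - α_{k+1} = (k + 1) / (k + a + 1)`, the factors `k + 1` and `(k + a)²` of `ρ_k` cancel in
`(1 - α_{k+1}) ρ_k α_k²`, leaving `a² / (k + a + 1)² = α_{k+1}²`. The bound `1 ≤ ρ_k` holds because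
the numerator of `ρ_k` exceeds its denominator by `(k + a) (a - 2) + (a - 1)`, which is nonnegative.
-/

namespace ChambolleDossal

section Field

variable {K : Type*} [Field K] {a t : K}

/-- The Chambolle–Dossal momentum parameter `α_t`, with the index `t` ranging over the field so
that statements about it are free of casts. -/
def alpha (a t : K) : K := a / (t + a)

/-- The Chambolle–Dossal relaxation parameter `ρ_t` that accompanies `alpha a t` in the R-WAPG
relation, again with the index `t` in the field. -/
def rho (a t : K) : K := (t + a) ^ 2 / ((t + 1) * (t + a + 1))

theorem alpha_add_one (a t : K) : alpha a (t + 1) = a / (t + a + 1) := by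
  rw [alpha, add_right_comm]

theorem one_sub_alpha_add_one (h : t + a + 1 ≠ 0) :
    1 - alpha a (t + 1) = (t + 1) / (t + a + 1) := by
  rw [alpha_add_one, one_sub_div h, add_right_comm, add_sub_cancel_right]

theorem alpha_add_one_sq (ht : t + 1 ≠ 0) (hta : t + a ≠ 0) (hta' : t + a + 1 ≠ 0) :
    alpha a (t + 1) ^ 2 = (1 - alpha a (t + 1)) * rho a t * alpha a t ^ 2 := by
  rw [one_sub_alpha_add_one hta', alpha_add_one, rho, alpha]
  field_simp

end Field

theorem add_one_mul_add_add_one_le_sq {R : Type*} [CommRing R] [LinearOrder R]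
    [IsStrictOrderedRing R] {a t : R} (ha : 2 ≤ a) (hta : 0 ≤ t + a) :
    (t + 1) * (t + a + 1) ≤ (t + a) ^ 2 := by
  have excess : (t + a) ^ 2 - (t + 1) * (t + a + 1) = (t + a) * (a - 2) + (a - 1) := by ring
  have excess_nonneg : 0 ≤ (t + a) * (a - 2) + (a - 1) :=
    add_nonneg (mul_nonneg hta (sub_nonneg.2 ha)) (sub_nonneg.2 (one_le_two.trans ha))
  exact sub_nonneg.1 (excess_nonneg.trans_eq excess.symm)

theorem one_le_rho {K : Type*} [Field K] [LinearOrder K] [IsStrictOrderedRing K] {a t : K}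
    (ha : 2 ≤ a) (ht : -1 < t) : 1 ≤ rho a t := by
  have denom_pos : 0 < (t + 1) * (t + a + 1) := mul_pos (by linarith) (by linarith)
  rw [rho, one_le_div denom_pos]
  exact add_one_mul_add_add_one_le_sq ha (by linarith)

end ChambolleDossal

/-- Chambolle–Dossal sequence validity.
Fix `a ≥ 2` and define `α_k := a/(k + a)`, `ρ_k := (k + a)²/((k + 1)(k + a + 1))` for
all `k ≥ 0`. Then (with `μ = 0`) the pair satisfies the R-WAPG relation
`α_{k+1}² = (1 − α_{k+1})ρ_k α_k²` for all `k ≥ 0`, and moreover `ρ_k ≥ 1` for all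
`k ≥ 0`. -/
theorem stmt16 (a : ℝ) (ha : 2 ≤ a)
    (α ρ : ℕ → ℝ)
    (hα : ∀ k : ℕ, α k = a / (k + a))
    (hρ : ∀ k : ℕ, ρ k = ((k : ℝ) + a) ^ 2 / (((k : ℝ) + 1) * ((k : ℝ) + a + 1))) :
    (∀ k : ℕ, (α (k + 1)) ^ 2 = (1 - α (k + 1)) * ρ k * (α k) ^ 2) ∧
      (∀ k : ℕ, 1 ≤ ρ k) := by
  have α_eq (k : ℕ) : α k = ChambolleDossal.alpha a k := hα k
  have ρ_eq (k : ℕ) : ρ k = ChambolleDossal.rho a k := hρ k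
  refine ⟨fun k => ?_, fun k => ?_⟩
  · have ha_pos : 0 < a := two_pos.trans_le ha
    have hk : (k : ℝ) + a ≠ 0 := (add_pos_of_nonneg_of_pos k.cast_nonneg ha_pos).ne'
    have hk_succ : (k : ℝ) + a + 1 ≠ 0 := by positivity
    rw [α_eq, α_eq, ρ_eq, Nat.cast_add_one]
    exact ChambolleDossal.alpha_add_one_sq k.cast_add_one_ne_zero hk hk_succ
  · rw [ρ_eq]
    exact ChambolleDossal.one_le_rho ha (neg_one_lt_zero.trans_le k.cast_nonneg)
end

section
/- Constant R-WAPG sequence: let 0 < μ < L, q := μ/L, and fix r ∈ (√q, √(q^{-1})). Then the constant sequences α_k := r√q and ρ_k := ρ := (1 − r^{-1}√q)/(1 − r√q) satisfy: (i) α := r√q ∈ (q, 1) and ρ > 0 and the R-WAPG relation α² − qα = (1 − α)ρα² holds, so they form a valid R-WAPG sequence pair; (ii) the constant momentum θ := ρα(1 − α)/(ρα² + α) equals (1 − r^{-1}√q)(1 − r√q)/(1 − q); (iii) if r = 1 then θ = (1 − √q)/(1 + √q); (iv) ρ > 1 for r ∈ (1, √(q^{-1})) and ρ ≤ 1 for r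 ∈ (√q, 1]; (v) max(ρ, 1)(1 − α) = 1 − min(μ/(αL), α). -/
/-! For a constant pair the R-WAPG relation, divided by `α²`, reads `ρ (1 - α) = 1 - q / α`, so
every claim is about the two numbers `α` and `q / α`. The choice `α = r √q` makes them `r √q` and
`r⁻¹ √q`, with geometric mean `√q`: comparing `ρ` with `1` is comparing `q / α` with `α`, that is,
`1` with `r`. -/

/-- The momentum `ρ_k α_k (1 - α_k) / (ρ_k α_k² + α_{k+1})` of R-WAPG for constant sequences
`α_k = α`, `ρ_k = ρ`. -/
def rwapgMomentum {K : Type*} [Field K] (α ρ : K) : K :=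
  ρ * α * (1 - α) / (ρ * α ^ 2 + α)

/-- The constant sequences `α_k = α`, `ρ_k = ρ` form a valid R-WAPG sequence pair for the inverse
condition number `q`: the relation `α_{k+1}² - q α_{k+1} = (1 - α_{k+1}) ρ_k α_k²` between
consecutive terms becomes the single equation `relation`. -/
structure IsConstRWAPGPair {K : Type*} [Field K] [LinearOrder K] (q α ρ : K) : Prop where
  inv_cond_nonneg : 0 ≤ q
  mem_Ioo : α ∈ Set.Ioo q 1
  ratio_pos : 0 < ρ
  relation : α ^ 2 - q * α = (1 - α) * ρ * α ^ 2

namespace IsConstRWAPGPair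

variable {K : Type*} [Field K] [LinearOrder K] {q α ρ : K}

theorem pos (h : IsConstRWAPGPair q α ρ) : 0 < α :=
  h.inv_cond_nonneg.trans_lt h.mem_Ioo.1

variable [IsStrictOrderedRing K]

theorem of_mem_Ioo (hq : 0 ≤ q) (hα : α ∈ Set.Ioo q 1) :
    IsConstRWAPGPair q α ((1 - q / α) / (1 - α)) where
  inv_cond_nonneg := hq
  mem_Ioo := hα
  ratio_pos :=
    div_pos (sub_pos.2 ((div_lt_one (hq.trans_lt hα.1)).2 hα.1)) (sub_pos.2 hα.2)
  relation := by
    have hα0 : α ≠ 0 := (hq.trans_lt hα.1).ne'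
    rw [mul_div_cancel₀ _ (sub_pos.2 hα.2).ne']
    field_simp

theorem one_sub_pos (h : IsConstRWAPGPair q α ρ) : 0 < 1 - α :=
  sub_pos.2 h.mem_Ioo.2

theorem ratio_mul_one_sub (h : IsConstRWAPGPair q α ρ) : ρ * (1 - α) = 1 - q / α := by
  have hα := h.pos.ne'
  refine mul_right_cancel₀ (pow_ne_zero 2 hα) ?_
  calc ρ * (1 - α) * α ^ 2 = (1 - α) * ρ * α ^ 2 := by ring
    _ = α ^ 2 - q * α := h.relation.symm
    _ = (1 - q / α) * α ^ 2 := by field_simp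

theorem one_lt_ratio_iff (h : IsConstRWAPGPair q α ρ) : 1 < ρ ↔ q < α ^ 2 :=
  calc 1 < ρ ↔ 1 - α < ρ * (1 - α) := (lt_mul_iff_one_lt_left h.one_sub_pos).symm
    _ ↔ q / α < α := by rw [h.ratio_mul_one_sub, sub_lt_sub_iff_left]
    _ ↔ q < α ^ 2 := by rw [div_lt_iff₀ h.pos, sq]

theorem max_ratio_one_mul_one_sub (h : IsConstRWAPGPair q α ρ) :
    max ρ 1 * (1 - α) = 1 - min (q / α) α := by
  rw [max_mul_of_nonneg _ _ h.one_sub_pos.le, h.ratio_mul_one_sub, one_mul,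
    max_sub_sub_left]

theorem momentum_eq (h : IsConstRWAPGPair q α ρ) :
    rwapgMomentum α ρ = (1 - q / α) * (1 - α) / (1 - q) := by
  have hα := h.pos
  have hq : 1 - q ≠ 0 := (sub_pos.2 (h.mem_Ioo.1.trans h.mem_Ioo.2)).ne'
  have hden : ρ * α ^ 2 + α ≠ 0 := by have := h.ratio_pos; positivity
  have hden_mul : (ρ * α ^ 2 + α) * (1 - α) = α * (1 - q) := by
    linear_combination -h.relation
  rw [rwapgMomentum, ← h.ratio_mul_one_sub, div_eq_div_iff hden hq]
  linear_combination -ρ * (1 - α) * hden_mul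

theorem momentum_eq_of_sq_eq (h : IsConstRWAPGPair q α ρ) (hαq : α ^ 2 = q) :
    rwapgMomentum α ρ = (1 - α) / (1 + α) := by
  have hdiv : q / α = α := by rw [← hαq, sq, mul_self_div_self]
  have hfactor : 1 - q = (1 + α) * (1 - α) := by rw [← hαq]; ring
  rw [h.momentum_eq, hdiv, hfactor, mul_div_mul_right _ _ h.one_sub_pos.ne']

end IsConstRWAPGPair

theorem div_mul_sqrt_self (r q : ℝ) : q / (r * √q) = r⁻¹ * √q := by
  rw [mul_comm r, ← div_div, Real.div_sqrt, div_eq_inv_mul]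

theorem mul_sqrt_mem_Ioo_iff {r q : ℝ} (hq : 0 < q) :
    r * √q ∈ Set.Ioo q 1 ↔ r ∈ Set.Ioo √q √q⁻¹ := by
  have hs : 0 < √q := Real.sqrt_pos.2 hq
  rw [Set.mem_Ioo, Set.mem_Ioo, Real.sqrt_inv, ← div_lt_iff₀ hs, Real.div_sqrt,
    ← lt_div_iff₀ hs, one_div]

theorem lt_mul_sqrt_sq_iff {r q : ℝ} (hq : 0 < q) (hr : 0 ≤ r) :
    q < (r * √q) ^ 2 ↔ 1 < r := by
  rw [mul_pow, Real.sq_sqrt hq.le, lt_mul_iff_one_lt_left hq, one_lt_sq_iff₀ hr]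

/-- constant R-WAPG sequence.
Let `0 < μ < L`, `q := μ/L`, and fix `r ∈ (√q, √(q⁻¹))`. Then the constants
`α := r√q` and `ρ := (1 − r⁻¹√q)/(1 − r√q)` satisfy:
(i) `α ∈ (q, 1)`, `ρ > 0` and `α² − qα = (1 − α)ρα²` (valid R-WAPG pair);
(ii) `θ := ρα(1 − α)/(ρα² + α) = (1 − r⁻¹√q)(1 − r√q)/(1 − q)`;
(iii) if `r = 1` then `θ = (1 − √q)/(1 + √q)`;
(iv) `ρ > 1` for `r ∈ (1, √(q⁻¹))` and `ρ ≤ 1` for `r ∈ (√q, 1]`;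
(v) `max(ρ, 1)(1 − α) = 1 − min(μ/(αL), α)`. -/
theorem stmt18 (μ L : ℝ) (hμ : 0 < μ) (hμL : μ < L)
    (q r α ρ θ : ℝ)
    (hq : q = μ / L)
    (hr : r ∈ Set.Ioo (Real.sqrt q) (Real.sqrt q⁻¹))
    (hα : α = r * Real.sqrt q)
    (hρ : ρ = (1 - r⁻¹ * Real.sqrt q) / (1 - r * Real.sqrt q))
    (hθ : θ = ρ * α * (1 - α) / (ρ * α ^ 2 + α)) :
    (α ∈ Set.Ioo q 1 ∧ 0 < ρ ∧ α ^ 2 - q * α = (1 - α) * ρ * α ^ 2)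
      ∧ θ = (1 - r⁻¹ * Real.sqrt q) * (1 - r * Real.sqrt q) / (1 - q)
      ∧ (r = 1 → θ = (1 - Real.sqrt q) / (1 + Real.sqrt q))
      ∧ (1 < r → 1 < ρ) ∧ (r ≤ 1 → ρ ≤ 1)
      ∧ max ρ 1 * (1 - α) = 1 - min (μ / (α * L)) α := by
  have hq0 : 0 < q := hq ▸ div_pos hμ (hμ.trans hμL)
  have hqα : q / α = r⁻¹ * √q := by rw [hα, div_mul_sqrt_self]
  have hpair : IsConstRWAPGPair q α ρ := by
    rw [hρ, ← hqα, ← hα]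
    exact .of_mem_Ioo hq0.le (hα ▸ (mul_sqrt_mem_Ioo_iff hq0).2 hr)
  have hρr : 1 < ρ ↔ 1 < r := by
    rw [hpair.one_lt_ratio_iff, hα, lt_mul_sqrt_sq_iff hq0 ((Real.sqrt_nonneg q).trans hr.1.le)]
  change θ = rwapgMomentum α ρ at hθ
  refine ⟨⟨hpair.mem_Ioo, hpair.ratio_pos, hpair.relation⟩, ?_, ?_, hρr.2, ?_, ?_⟩
  · rw [hθ, hpair.momentum_eq, hqα, hα]
  · intro hr1
    have hα_sqrt : α = √q := by rw [hα, hr1, one_mul]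
    rw [hθ, hpair.momentum_eq_of_sq_eq (by rw [hα_sqrt, Real.sq_sqrt hq0.le]), hα_sqrt]
  · exact fun hr1 ↦ not_lt.1 (mt hρr.1 hr1.not_gt)
  · rw [hpair.max_ratio_one_mul_one_sub, hq, div_div, mul_comm L]
end

section
/- Fixed momentum accelerated proximal gradient: let 0 < μ < L (f L-Lipschitz smooth and μ-strongly convex), q := μ/L, fix r ∈ (√q, √(q^{-1})), set α := r√q and θ := (1 − r^{-1}√q)(1 − r√q)/(1 − q). Run: y_1 = x_1, and for k ≥ 1: x_{k+1} := y_k − L^{-1} G_L(y_k), y_{k+1} := x_{k+1} + θ(x_{k+1} − x_k). Then for any minimizer x* of F and all k ≥ 1: F(x_{k+1}) − F(x*) ≤ (1 − min(μ/(αL), α))^k (F(x_1) − F(x*) + (L/2)‖x_1 − x*‖²); in particular the optimality gap converges linearly at rate O((1 − min(μ/(αL), α))^k). -/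
open RealInnerProductSpace

/-!
The extrapolation with parameter `θ` is a convex combination in disguise: with the momentum points
`v₁ = x₁`, `v_{k+1} = x_k + α⁻¹ (x_{k+1} - x_k)` it reads
`y_k = x_k + (α - q) / (1 - q) (v_k - x_k)`.
By the descent lemma, strong convexity of `f` and strong convexity of the proximal subproblem, the
proximal gradient step satisfies `F (T y) + L/2 ‖z - T y‖² ≤ F z + (L - μ)/2 ‖z - y‖²` for all `z`.
Averaging this over `z = x_k` with weight `1 - α` and `z = x*` with weight `α` leaves a quadratic
form in `x_k - x*` and `v_k - x*`, which convexity of the squared norm bounds by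
`(L/2) α (α - q) ‖v_k - x*‖²`. Hence `F x_k - F x* + (L α²/2) ‖v_k - x*‖²` shrinks by the factor
`max (1 - α) (1 - q/α) = 1 - min (q/α) α` at every step.
-/

section Smooth

variable {E : Type*} [NormedAddCommGroup E] [InnerProductSpace ℝ E] [CompleteSpace E]
  {f : E → ℝ} {f' : E → E}

lemma hasDerivAt_comp_add_smul_of_hasGradientAt {p y d : E} {t : ℝ}
    (hf : HasGradientAt f p (y + t • d)) :
    HasDerivAt (fun τ : ℝ ↦ f (y + τ • d)) ⟪p, d⟫ t := by
  have hline : HasDerivAt (fun τ : ℝ ↦ y + τ • d) d t := by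
    simpa using ((hasDerivAt_id t).smul_const d).const_add y
  simpa only [InnerProductSpace.toDual_apply_apply] using!
    hf.hasFDerivAt.comp_hasDerivAt t hline

lemma le_add_inner_add_of_lipschitz_gradient {L : ℝ} (hgrad : ∀ x, HasGradientAt f (f' x) x)
    (hlip : ∀ x y, ‖f' x - f' y‖ ≤ L * ‖x - y‖) (x y : E) :
    f x ≤ f y + ⟪f' y, x - y⟫ + L / 2 * ‖x - y‖ ^ 2 := by
  set d := x - y with hd
  have hf (t : ℝ) := hasDerivAt_comp_add_smul_of_hasGradientAt (d := d) (hgrad (y + t • d))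
  have hmodel (t : ℝ) : HasDerivAt (fun τ ↦ f y + ⟪f' y, d⟫ * τ + L / 2 * ‖d‖ ^ 2 * τ ^ 2)
      (⟪f' y, d⟫ + L * t * ‖d‖ ^ 2) t := by
    refine ((((hasDerivAt_id t).const_mul _).const_add (f y)).add
      ((hasDerivAt_pow 2 t).const_mul _)).congr_deriv ?_
    push_cast
    ring
  have hslope (t : ℝ) (ht : t ∈ Set.Ico (0 : ℝ) 1) :
      ⟪f' (y + t • d), d⟫ ≤ ⟪f' y, d⟫ + L * t * ‖d‖ ^ 2 := by
    rw [← sub_le_iff_le_add', ← inner_sub_left]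
    calc ⟪f' (y + t • d) - f' y, d⟫
        ≤ ‖f' (y + t • d) - f' y‖ * ‖d‖ := real_inner_le_norm _ _
      _ ≤ L * ‖y + t • d - y‖ * ‖d‖ := by gcongr; exact hlip _ _
      _ = L * t * ‖d‖ ^ 2 := by
          rw [add_sub_cancel_left, norm_smul, Real.norm_of_nonneg ht.1]; ring
  simpa [hd] using image_le_of_deriv_right_le_deriv_boundary
    (fun t _ ↦ (hf t).continuousAt.continuousWithinAt) (fun t _ ↦ (hf t).hasDerivWithinAt)
    (by simp) (fun t _ ↦ (hmodel t).continuousAt.continuousWithinAt)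
    (fun t _ ↦ (hmodel t).hasDerivWithinAt) hslope (Set.right_mem_Icc.2 zero_le_one)

end Smooth

section ProximalStep

lemma strongConvexOn_add_sq_dist_le_of_isMinOn {V : Type*} [NormedAddCommGroup V]
    [NormedSpace ℝ V] {D : Set V} {φ : V → ℝ} {m : ℝ} {u z : V} (hφ : StrongConvexOn D m φ)
    (hu : u ∈ D) (hmin : IsMinOn φ D u) (hz : z ∈ D) :
    φ u + m / 2 * ‖z - u‖ ^ 2 ≤ φ z := by
  -- Compare `u` with `(1 - t) u + t z`, divide by `t`, and let `t → 0`.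
  have hsegment : ∀ t ∈ Set.Ioo (0 : ℝ) 1, φ u + (1 - t) * (m / 2 * ‖z - u‖ ^ 2) ≤ φ z := by
    rintro t ⟨ht0, ht1⟩
    have hconv := hφ.2 hz hu ht0.le (sub_nonneg.2 ht1.le) (add_sub_cancel t 1)
    have hle := isMinOn_iff.1 hmin _ <|
      hφ.1 hz hu ht0.le (sub_nonneg.2 ht1.le) (add_sub_cancel t 1)
    simp only [smul_eq_mul] at hconv
    refine le_of_mul_le_mul_left ?_ ht0
    linarith
  have hlim : Filter.Tendsto (fun t : ℝ ↦ φ u + (1 - t) * (m / 2 * ‖z - u‖ ^ 2))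
      (nhdsWithin 0 (Set.Ioi 0)) (nhds (φ u + (1 - 0) * (m / 2 * ‖z - u‖ ^ 2))) :=
    (Continuous.tendsto (by fun_prop) 0).mono_left nhdsWithin_le_nhds
  simpa using le_of_tendsto hlim
    (Filter.eventually_of_mem (Ioo_mem_nhdsGT zero_lt_one) hsegment)

variable {E : Type*} [NormedAddCommGroup E] [InnerProductSpace ℝ E] {D : Set E} {g : E → ℝ}

lemma strongConvexOn_add_inner_add_sq_dist (hg : ConvexOn ℝ D g) (p y : E) (L : ℝ) :
    StrongConvexOn D L (fun x ↦ g x + (⟪p, x⟫ + L / 2 * ‖x - y‖ ^ 2)) := by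
  rw [strongConvexOn_iff_convex]
  have haffine : ConvexOn ℝ D (fun x ↦ ⟪p - L • y, x⟫ + L / 2 * ‖y‖ ^ 2) :=
    ((innerₛₗ ℝ (p - L • y)).convexOn hg.1).add_const _
  refine (hg.add haffine).congr fun x _ ↦ ?_
  simp only [Pi.add_apply, inner_sub_left, real_inner_smul_left, norm_sub_sq_real,
    real_inner_comm x y]
  ring

lemma add_sq_dist_le_of_isMinOn_prox {f : E → ℝ} {L μ : ℝ} {p y u z : E}
    (hg : ConvexOn ℝ D g)
    (hu : u ∈ D) (hmin : IsMinOn (fun x ↦ g x + (⟪p, x⟫ + L / 2 * ‖x - y‖ ^ 2)) D u)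
    (hupper : f u ≤ f y + ⟪p, u - y⟫ + L / 2 * ‖u - y‖ ^ 2) (hz : z ∈ D)
    (hlower : f y + ⟪p, z - y⟫ + μ / 2 * ‖z - y‖ ^ 2 ≤ f z) :
    g u + f u + L / 2 * ‖z - u‖ ^ 2 ≤ g z + f z + (L - μ) / 2 * ‖z - y‖ ^ 2 := by
  have hgrowth := strongConvexOn_add_sq_dist_le_of_isMinOn
    (strongConvexOn_add_inner_add_sq_dist hg p y L) hu hmin hz
  rw [inner_sub_right] at hupper hlower
  linarith

end ProximalStep

section Momentum

variable {V : Type*} [AddCommGroup V] [Module ℝ V]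

/-- The momentum point `x + α⁻¹ (u - x)` obtained by prolonging the step from the iterate `x` to
the iterate `u` by the factor `α⁻¹`. -/
noncomputable def momentumPoint (α : ℝ) (x u : V) : V := x + α⁻¹ • (u - x)

/-- The sequence of momentum points attached to a sequence of iterates, started at `x 0`; its
distance to the minimizer enters the Lyapunov function of the method. -/
noncomputable def momentumSeq (α : ℝ) (x : ℕ → V) : ℕ → V
  | 0 => x 0
  | k + 1 => momentumPoint α (x k) (x (k + 1))

lemma eq_add_smul_momentumSeq_sub {q α : ℝ} {x y : ℕ → V} (hα : α ≠ 0)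
    (h0 : y 0 = x 0)
    (hy : ∀ k, y (k + 1) = x (k + 1) + ((1 - q / α) * (1 - α) / (1 - q)) • (x (k + 1) - x k)) :
    ∀ k, y k = x k + ((α - q) / (1 - q)) • (momentumSeq α x k - x k)
  | 0 => by simp [h0, momentumSeq]
  | k + 1 => by
    rw [hy, momentumSeq, momentumPoint]
    match_scalars <;> field_simp
    ring

end Momentum

section SquaredDistances

variable {E : Type*} [NormedAddCommGroup E] [InnerProductSpace ℝ E] {q α : ℝ} {x y v u s : E}

lemma norm_sq_convexComb {a b : ℝ} (hab : a + b = 1) (x y : E) :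
    ‖a • x + b • y‖ ^ 2 = a * ‖x‖ ^ 2 + b * ‖y‖ ^ 2 - a * b * ‖x - y‖ ^ 2 := by
  obtain rfl := eq_sub_of_add_eq hab
  simp only [norm_add_sq_real, norm_sub_sq_real, norm_smul, mul_pow, Real.norm_eq_abs, sq_abs,
    real_inner_smul_left, real_inner_smul_right]
  ring

lemma sq_mul_norm_momentumPoint_sub_sq (hα : α ≠ 0) :
    α ^ 2 * ‖momentumPoint α x u - s‖ ^ 2
      = (1 - α) * ‖x - u‖ ^ 2 + α * ‖s - u‖ ^ 2 - (1 - α) * α * ‖x - s‖ ^ 2 := by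
  have hcomb : (1 - α) • (x - u) + α • (s - u) = (-α) • (momentumPoint α x u - s) := by
    rw [momentumPoint]
    match_scalars <;> field_simp <;> ring
  have h := norm_sq_convexComb (sub_add_cancel 1 α) (x - u) (s - u)
  rwa [hcomb, norm_smul, mul_pow, Real.norm_eq_abs, sq_abs, neg_sq, sub_sub_sub_cancel_right] at h

lemma averaged_sq_dist_extrapolation_le (hq0 : 0 ≤ q) (hq1 : q ≠ 1) (hα : 0 < α) (hqα : q ≤ α)
    (hy : y = x + ((α - q) / (1 - q)) • (v - x)) :
    (1 - α) * ‖x - y‖ ^ 2 + α * ‖s - y‖ ^ 2 - (1 - α) * α * ‖x - s‖ ^ 2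
      ≤ α * (α - q) * ‖v - s‖ ^ 2 + α * q * ‖s - y‖ ^ 2 := by
  have hcomb : (1 - α) • (x - y) + α • (s - y)
      = (-α) • ((1 - q / α) • (v - s) + (q / α) • (y - s)) := by
    have : 1 - q ≠ 0 := sub_ne_zero.2 hq1.symm
    rw [hy]
    match_scalars <;> field_simp <;> ring
  have : 0 ≤ q / α := by positivity
  have hqα1 : 0 ≤ 1 - q / α := sub_nonneg.2 <| (div_le_one hα).2 hqα
  calc (1 - α) * ‖x - y‖ ^ 2 + α * ‖s - y‖ ^ 2 - (1 - α) * α * ‖x - s‖ ^ 2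
      = ‖(1 - α) • (x - y) + α • (s - y)‖ ^ 2 := by
        rw [norm_sq_convexComb (sub_add_cancel 1 α), sub_sub_sub_cancel_right]
    _ = α ^ 2 * ‖(1 - q / α) • (v - s) + (q / α) • (y - s)‖ ^ 2 := by
        rw [hcomb, norm_smul, mul_pow, Real.norm_eq_abs, sq_abs, neg_sq]
    _ ≤ α ^ 2 * ((1 - q / α) * ‖v - s‖ ^ 2 + q / α * ‖y - s‖ ^ 2) := by
        rw [norm_sq_convexComb (sub_add_cancel 1 (q / α))]
        gcongr
        exact sub_le_self _ (by positivity)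
    _ = α * (α - q) * ‖v - s‖ ^ 2 + α * q * ‖s - y‖ ^ 2 := by
        rw [norm_sub_rev y s]; field_simp

end SquaredDistances

section Lyapunov

/-- The Lyapunov function of the accelerated method at an iterate `x` with momentum point `v`: the
gap of the objective `F` to the reference point `s` plus a multiple of the squared distance of `v`
to `s`. -/
noncomputable def lyapunov {V : Type*} [NormedAddCommGroup V] (F : V → ℝ) (L α : ℝ)
    (s x v : V) : ℝ :=
  F x - F s + L * α ^ 2 / 2 * ‖v - s‖ ^ 2

variable {E : Type*} [NormedAddCommGroup E] [InnerProductSpace ℝ E] {F : E → ℝ} {L q α : ℝ} {s : E}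

lemma lyapunov_momentumPoint_le {x y v u : E} (hL : 0 ≤ L) (hq0 : 0 ≤ q) (hq1 : q ≠ 1)
    (hα : 0 < α) (hqα : q ≤ α) (hα1 : α ≤ 1) (hy : y = x + ((α - q) / (1 - q)) • (v - x))
    (hx : F u + L / 2 * ‖x - u‖ ^ 2 ≤ F x + L * (1 - q) / 2 * ‖x - y‖ ^ 2)
    (hs : F u + L / 2 * ‖s - u‖ ^ 2 ≤ F s + L * (1 - q) / 2 * ‖s - y‖ ^ 2) :
    lyapunov F L α s u (momentumPoint α x u)
      ≤ (1 - α) * (F x - F s) + L / 2 * (α * (α - q) * ‖v - s‖ ^ 2) := by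
  have hnew := congrArg (L / 2 * ·) (sq_mul_norm_momentumPoint_sub_sq (x := x) (u := u) (s := s)
    hα.ne')
  have hold := mul_le_mul_of_nonneg_left
    (averaged_sq_dist_extrapolation_le (s := s) hq0 hq1 hα hqα hy) (div_nonneg hL zero_le_two)
  have hx_avg := mul_le_mul_of_nonneg_left hx (sub_nonneg.2 hα1)
  have hs_avg := mul_le_mul_of_nonneg_left hs hα.le
  have hdrop : 0 ≤ L / 2 * (q * (1 - α) * ‖x - y‖ ^ 2) := by
    have := sub_nonneg.2 hα1
    positivity
  rw [lyapunov]
  linarith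

lemma lyapunov_momentumPoint_le_mul {x y v u : E} (hL : 0 ≤ L) (hq0 : 0 ≤ q) (hq1 : q ≠ 1)
    (hα : 0 < α) (hqα : q ≤ α) (hα1 : α ≤ 1) (hy : y = x + ((α - q) / (1 - q)) • (v - x))
    (hx : F u + L / 2 * ‖x - u‖ ^ 2 ≤ F x + L * (1 - q) / 2 * ‖x - y‖ ^ 2)
    (hs : F u + L / 2 * ‖s - u‖ ^ 2 ≤ F s + L * (1 - q) / 2 * ‖s - y‖ ^ 2) (hsx : F s ≤ F x) :
    lyapunov F L α s u (momentumPoint α x u)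
      ≤ (1 - min (q / α) α) * lyapunov F L α s x v := by
  have : 0 ≤ F x - F s := sub_nonneg.2 hsx
  calc lyapunov F L α s u (momentumPoint α x u)
      ≤ (1 - α) * (F x - F s) + L / 2 * (α * (α - q) * ‖v - s‖ ^ 2) :=
        lyapunov_momentumPoint_le hL hq0 hq1 hα hqα hα1 hy hx hs
    _ = (1 - α) * (F x - F s) + (1 - q / α) * (L * α ^ 2 / 2 * ‖v - s‖ ^ 2) := by field_simp
    _ ≤ (1 - min (q / α) α) * (F x - F s)
          + (1 - min (q / α) α) * (L * α ^ 2 / 2 * ‖v - s‖ ^ 2) := by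
        gcongr
        · exact min_le_right _ _
        · exact min_le_left _ _
    _ = (1 - min (q / α) α) * lyapunov F L α s x v := by rw [lyapunov, mul_add]

lemma min_div_lt_one (hq : q < 1) : min (q / α) α < 1 := by
  rcases lt_or_ge α 1 with hα | hα
  · exact (min_le_right _ _).trans_lt hα
  · exact (min_le_left _ _).trans_lt <| (div_lt_one (by linarith)).2 (hq.trans_le hα)

theorem gap_le_pow_mul_of_prox_steps {D : Set E} {x y : ℕ → E} (hL : 0 ≤ L) (hq0 : 0 < q)
    (hq1 : q < 1) (hα : α ∈ Set.Icc q 1) (h0 : y 0 = x 0)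
    (hy : ∀ k, y (k + 1) = x (k + 1) + ((1 - q / α) * (1 - α) / (1 - q)) • (x (k + 1) - x k))
    (hstep : ∀ k, ∀ z ∈ D,
      F (x (k + 1)) + L / 2 * ‖z - x (k + 1)‖ ^ 2 ≤ F z + L * (1 - q) / 2 * ‖z - y k‖ ^ 2)
    (hxD : ∀ k, x k ∈ D) (hs : s ∈ D) (hmin : IsMinOn F D s) (k : ℕ) :
    F (x k) - F s
      ≤ (1 - min (q / α) α) ^ k * (F (x 0) - F s + L / 2 * ‖x 0 - s‖ ^ 2) := by
  obtain ⟨hqα, hα1⟩ := hα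
  have hα0 : 0 < α := hq0.trans_le hqα
  have hrate : 0 ≤ 1 - min (q / α) α := (sub_pos.2 (min_div_lt_one hq1)).le
  calc F (x k) - F s
      ≤ lyapunov F L α s (x k) (momentumSeq α x k) := le_add_of_nonneg_right (by positivity)
    _ ≤ (1 - min (q / α) α) ^ k * lyapunov F L α s (x 0) (x 0) :=
        le_geom (u := fun j ↦ lyapunov F L α s (x j) (momentumSeq α x j)) hrate k fun j _ ↦
          lyapunov_momentumPoint_le_mul hL hq0.le hq1.ne hα0 hqα hα1
            (eq_add_smul_momentumSeq_sub hα0.ne' h0 hy j) (hstep j _ (hxD j)) (hstep j _ hs)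
            (isMinOn_iff.1 hmin _ (hxD j))
    _ ≤ (1 - min (q / α) α) ^ k * (F (x 0) - F s + L / 2 * ‖x 0 - s‖ ^ 2) := by
        rw [lyapunov]
        gcongr
        exact mul_le_of_le_one_right hL (pow_le_one₀ hα0.le hα1)

end Lyapunov

section Parameters

variable {q r : ℝ}

lemma mul_sqrt_mem_Icc (hq : 0 < q) (hr : r ∈ Set.Icc (√q) (√q⁻¹)) : r * √q ∈ Set.Icc q 1 := by
  have hsqrt : 0 < √q := Real.sqrt_pos.2 hq
  constructor
  · calc q = √q * √q := (Real.mul_self_sqrt hq.le).symm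
      _ ≤ r * √q := by gcongr; exact hr.1
  · calc r * √q ≤ √q⁻¹ * √q := by gcongr; exact hr.2
      _ = 1 := by rw [Real.sqrt_inv, inv_mul_cancel₀ hsqrt.ne']

lemma inv_mul_sqrt_eq_div (q r : ℝ) : r⁻¹ * √q = q / (r * √q) := by
  rw [mul_comm r, ← div_div, Real.div_sqrt, div_eq_inv_mul]

end Parameters

section ExtendedReal

variable {X : Type*} {g : X → EReal}

/-- The effective domain of an extended-real-valued function, in the sense of convex analysis. The
value `⊥` is not excluded: the functions considered here do not take it. -/
def effDomain (g : X → EReal) : Set X := {x | g x ≠ ⊤}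

lemma coe_toReal_of_mem_effDomain (hbot : ∀ x, g x ≠ ⊥) {x : X} (hx : x ∈ effDomain g) :
    ((g x).toReal : EReal) = g x :=
  EReal.coe_toReal hx (hbot x)

lemma convexOn_toReal_effDomain {V : Type*} [AddCommMonoid V] [Module ℝ V] {g : V → EReal}
    (hbot : ∀ x, g x ≠ ⊥)
    (hconv : ∀ x y : V, ∀ a b : ℝ, 0 ≤ a → 0 ≤ b → a + b = 1 →
      g (a • x + b • y) ≤ (a : EReal) * g x + (b : EReal) * g y) :
    ConvexOn ℝ (effDomain g) (fun x ↦ (g x).toReal) := by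
  have hle : ∀ x ∈ effDomain g, ∀ y ∈ effDomain g, ∀ a b : ℝ, 0 ≤ a → 0 ≤ b → a + b = 1 →
      g (a • x + b • y) ≤ ((a * (g x).toReal + b * (g y).toReal : ℝ) : EReal) := by
    intro x hx y hy a b ha hb hab
    simpa only [EReal.coe_add, EReal.coe_mul, coe_toReal_of_mem_effDomain hbot hx,
      coe_toReal_of_mem_effDomain hbot hy] using hconv x y a b ha hb hab
  refine ⟨fun x hx y hy a b ha hb hab ↦ ?_, fun x hx y hy a b ha hb hab ↦ ?_⟩
  · exact ((hle x hx y hy a b ha hb hab).trans_lt (EReal.coe_lt_top _)).ne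
  · exact EReal.toReal_le_toReal (hle x hx y hy a b ha hb hab) (hbot _) (EReal.coe_ne_top _)

lemma mem_effDomain_and_isMinOn_toReal (hbot : ∀ x, g x ≠ ⊥) (hproper : ∃ x, g x ≠ ⊤)
    {c : X → ℝ} {u : X} (hu : ∀ x, g u + c u ≤ g x + c x) :
    u ∈ effDomain g ∧ IsMinOn (fun x ↦ (g x).toReal + c x) (effDomain g) u := by
  have hle : ∀ x ∈ effDomain g, g u + c u ≤ (((g x).toReal + c x : ℝ) : EReal) := by
    intro x hx
    rw [EReal.coe_add, coe_toReal_of_mem_effDomain hbot hx]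
    exact hu x
  have hu_mem : u ∈ effDomain g := by
    obtain ⟨x, hx⟩ := hproper
    intro htop
    have := hle x hx
    rw [htop, EReal.top_add_coe, top_le_iff] at this
    exact EReal.coe_ne_top _ this
  refine ⟨hu_mem, isMinOn_iff.2 fun x hx ↦ ?_⟩
  have := hle x hx
  rw [← coe_toReal_of_mem_effDomain hbot hu_mem, ← EReal.coe_add] at this
  exact EReal.coe_le_coe_iff.1 this

lemma coe_add_eq_coe_toReal_add (hbot : ∀ x, g x ≠ ⊥) {x : X} (hx : x ∈ effDomain g) (c : ℝ) :
    (c : EReal) + g x = (((g x).toReal + c : ℝ) : EReal) := by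
  rw [EReal.coe_add, coe_toReal_of_mem_effDomain hbot hx, add_comm]

end ExtendedReal

theorem stmt19_general {E : Type*} [NormedAddCommGroup E] [InnerProductSpace ℝ E] [CompleteSpace E]
    (L μ : ℝ) (hμ : 0 < μ) (hμL : μ < L)
    (f : E → ℝ) (f' : E → E) (hgrad : ∀ x, HasGradientAt f (f' x) x)
    (hlip : ∀ x y, ‖f' x - f' y‖ ≤ L * ‖x - y‖)
    (hsc : ∀ x y, f y + ⟪f' y, x - y⟫ + μ / 2 * ‖x - y‖ ^ 2 ≤ f x)
    (g : E → EReal) (hg_bot : ∀ x, g x ≠ ⊥) (hg_proper : ∃ x, g x ≠ ⊤)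
    (hg_conv : ∀ x y : E, ∀ a b : ℝ, 0 ≤ a → 0 ≤ b → a + b = 1 →
      g (a • x + b • y) ≤ (a : EReal) * g x + (b : EReal) * g y)
    (T : E → E)
    (hT : ∀ y x, g (T y) + ((⟪f' y, T y⟫ + L / 2 * ‖T y - y‖ ^ 2 : ℝ) : EReal)
        ≤ g x + ((⟪f' y, x⟫ + L / 2 * ‖x - y‖ ^ 2 : ℝ) : EReal))
    (q r α θ : ℝ) (hq : q = μ / L) (hr : r ∈ Set.Icc (√q) (√q⁻¹)) (hα : α = r * √q)
    (hθ : θ = (1 - r⁻¹ * √q) * (1 - r * √q) / (1 - q))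
    (x y : ℕ → E) (hinit : y 1 = x 1)
    (hx : ∀ k, 1 ≤ k → x (k + 1) = y k - L⁻¹ • (L • (y k - T (y k))))
    (hy : ∀ k, 1 ≤ k → y (k + 1) = x (k + 1) + θ • (x (k + 1) - x k))
    (xstar : E) (hmin : ∀ z, (f xstar : EReal) + g xstar ≤ (f z : EReal) + g z) (k : ℕ) :
    ((f (x (k + 1)) : EReal) + g (x (k + 1))) - ((f xstar : EReal) + g xstar)
      ≤ (((1 - min (μ / (α * L)) α) ^ k : ℝ) : EReal)
        * (((f (x 1) : EReal) + g (x 1)) - ((f xstar : EReal) + g xstar)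
            + ((L / 2 * ‖x 1 - xstar‖ ^ 2 : ℝ) : EReal)) := by
  have hL : 0 < L := hμ.trans hμL
  have hq0 : 0 < q := hq ▸ div_pos hμ hL
  have hq1 : q < 1 := hq ▸ (div_lt_one hL).2 hμL
  have hα_mem : α ∈ Set.Icc q 1 := hα ▸ mul_sqrt_mem_Icc hq0 hr
  rw [inv_mul_sqrt_eq_div, ← hα] at hθ
  rw [show μ / (α * L) = q / α by rw [hq, div_div, mul_comm]]
  obtain ⟨hs, hs_min⟩ := mem_effDomain_and_isMinOn_toReal (c := f) hg_bot hg_proper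
    fun z ↦ by simpa only [add_comm] using hmin z
  have hprox w := mem_effDomain_and_isMinOn_toReal
    (c := fun z ↦ ⟪f' w, z⟫ + L / 2 * ‖z - w‖ ^ 2) hg_bot hg_proper (hT w)
  have hxT k : x (k + 2) = T (y (k + 1)) := by
    rw [hx (k + 1) k.succ_pos, inv_smul_smul₀ hL.ne', sub_sub_cancel]
  rw [coe_add_eq_coe_toReal_add hg_bot hs]
  by_cases hx1 : g (x 1) = ⊤
  · have hrate : 0 < 1 - min (q / α) α := sub_pos.2 (min_div_lt_one hq1)
    rw [hx1, EReal.coe_add_top, EReal.top_sub_coe, EReal.top_add_coe,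
      EReal.coe_mul_top_of_pos (pow_pos hrate k)]
    exact le_top
  have hx_mem : ∀ k, x (k + 1) ∈ effDomain g
    | 0 => hx1
    | k + 1 => hxT k ▸ (hprox _).1
  have hstep k z (hz : z ∈ effDomain g) := hxT k ▸ add_sq_dist_le_of_isMinOn_prox
    (convexOn_toReal_effDomain hg_bot hg_conv) (hprox (y (k + 1))).1 (hprox _).2
    (le_add_inner_add_of_lipschitz_gradient hgrad hlip _ _) hz (hsc z _)
  rw [show L - μ = L * (1 - q) by rw [hq]; field_simp] at hstep
  rw [coe_add_eq_coe_toReal_add hg_bot (hx_mem k), coe_add_eq_coe_toReal_add hg_bot hx1]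
  exact_mod_cast gap_le_pow_mul_of_prox_steps (x := fun k ↦ x (k + 1)) (y := fun k ↦ y (k + 1))
    hL.le hq0 hq1 hα_mem hinit (fun k ↦ hθ ▸ hy (k + 1) k.succ_pos) hstep hx_mem hs hs_min k

/-- fixed momentum accelerated proximal gradient.
Let `0 < μ < L` (`f` `L`-Lipschitz smooth and `μ`-strongly convex), `q := μ/L`, fix
`r ∈ (√q, √(q⁻¹))`, set `α := r√q` and `θ := (1 − r⁻¹√q)(1 − r√q)/(1 − q)`.
Run: `y₁ = x₁`, and for `k ≥ 1`: `x_{k+1} := y_k − L⁻¹G_L(y_k)`,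
`y_{k+1} := x_{k+1} + θ(x_{k+1} − x_k)`.
Then for any minimizer `x*` of `F = f + g` and all `k ≥ 1`:
`F(x_{k+1}) − F(x*) ≤ (1 − min(μ/(αL), α))^k (F(x₁) − F(x*) + (L/2)‖x₁ − x*‖²)`. -/
theorem stmt19 {n : ℕ} (L μ : ℝ) (hμ : 0 < μ) (hμL : μ < L)
    (f : EuclideanSpace ℝ (Fin n) → ℝ)
    (f' : EuclideanSpace ℝ (Fin n) → EuclideanSpace ℝ (Fin n))
    (hgrad : ∀ x, HasGradientAt f (f' x) x)
    (hlip : ∀ x y, ‖f' x - f' y‖ ≤ L * ‖x - y‖)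
    (hsc : ∀ x y, f y + ⟪f' y, x - y⟫ + μ / 2 * ‖x - y‖ ^ 2 ≤ f x)
    (g : EuclideanSpace ℝ (Fin n) → EReal)
    (hg_bot : ∀ x, g x ≠ ⊥) (hg_proper : ∃ x, g x ≠ ⊤)
    (hg_lsc : LowerSemicontinuous g)
    (hg_conv : ∀ x y : EuclideanSpace ℝ (Fin n), ∀ a b : ℝ,
      0 ≤ a → 0 ≤ b → a + b = 1 →
      g (a • x + b • y) ≤ (a : EReal) * g x + (b : EReal) * g y)
    (T : EuclideanSpace ℝ (Fin n) → EuclideanSpace ℝ (Fin n))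
    (hT : ∀ y x, g (T y) + ((⟪f' y, T y⟫ + L / 2 * ‖T y - y‖ ^ 2 : ℝ) : EReal)
        ≤ g x + ((⟪f' y, x⟫ + L / 2 * ‖x - y‖ ^ 2 : ℝ) : EReal))
    (q r α θ : ℝ)
    (hq : q = μ / L)
    (hr : r ∈ Set.Ioo (Real.sqrt q) (Real.sqrt q⁻¹))
    (hα : α = r * Real.sqrt q)
    (hθ : θ = (1 - r⁻¹ * Real.sqrt q) * (1 - r * Real.sqrt q) / (1 - q))
    (x y : ℕ → EuclideanSpace ℝ (Fin n))
    (hinit : y 1 = x 1)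
    (hx : ∀ k, 1 ≤ k → x (k + 1) = y k - L⁻¹ • (L • (y k - T (y k))))
    (hy : ∀ k, 1 ≤ k → y (k + 1) = x (k + 1) + θ • (x (k + 1) - x k))
    (xstar : EuclideanSpace ℝ (Fin n))
    (hmin : ∀ z, (f xstar : EReal) + g xstar ≤ (f z : EReal) + g z) :
    ∀ k : ℕ, 1 ≤ k →
      ((f (x (k + 1)) : EReal) + g (x (k + 1))) - ((f xstar : EReal) + g xstar)
        ≤ (((1 - min (μ / (α * L)) α) ^ k : ℝ) : EReal)
          * (((f (x 1) : EReal) + g (x 1)) - ((f xstar : EReal) + g xstar)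
              + ((L / 2 * ‖x 1 - xstar‖ ^ 2 : ℝ) : EReal)) := fun k _ ↦
  stmt19_general L μ hμ hμL f f' hgrad hlip hsc g hg_bot hg_proper hg_conv T hT q r α θ hq
    (Set.Ioo_subset_Icc_self hr) hα hθ x y hinit hx hy xstar hmin k
end
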